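/- arXiv:0710.1178 — 3 statements merged into one kernel-verified Lean document; each statement's English description precedes it below -/
import Mathlib

section
/- Let $(A, \mathfrak{m})$ be a Cohen-Macaulay local ring of dimension $d > 0$ with infinite residue field, $I$ an $\mathfrak{m}$-primary ideal, and $Q$ a minimal reduction of $I$. Then for all $n \geq 0$, $\ell_A(A/I^{n+1}) = e_0 \binom{n+d}{d} - (e_0 - \ell_A(A/I))\binom{n+d-1}{d-1} - \ell_A(S_n)$, where $e_0 = e_0(I)$ is the multiplicity of $I$ and $S_n$ is the degree-$n$ component of the Sally module $S_Q(I)$. -/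
open IsLocalRing Polynomial

/-- A Noetherian local ring is Cohen–Macaulay of dimension `d` iff its Krull dimension
is `d` and there is a regular sequence of length `d` in the maximal ideal. -/
def IsCohenMacaulayLocal (A : Type*) [CommRing A] [IsLocalRing A] (d : ℕ) : Prop :=
  ringKrullDim A = d ∧
    ∃ rs : List A, rs.length = d ∧ (∀ x ∈ rs, x ∈ maximalIdeal A) ∧
      RingTheory.Sequence.IsRegular A rs

/-- `I` is primary to the maximal ideal (i.e. `𝔪`-primary). -/
def IsPrimaryToMax (A : Type*) [CommRing A] [IsLocalRing A] (I : Ideal A) : Prop :=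
  I ≤ maximalIdeal A ∧ maximalIdeal A ≤ I.radical

/-- The `A`-submodule `I·R(I)` of `A[t]`, where `R(I) = A[It]` is the Rees algebra. -/
noncomputable def sallyIR (A : Type*) [CommRing A] (I : Ideal A) : Submodule A A[X] :=
  I • Subalgebra.toSubmodule (reesAlgebra I)

/-- The `A`-submodule `I·T` of `A[t]`, where `T = A[Qt]`. -/
noncomputable def sallyIT (A : Type*) [CommRing A] (I Q : Ideal A) : Submodule A A[X] :=
  I • Subalgebra.toSubmodule (reesAlgebra Q)

/-- The Sally module `S_Q(I) = I·R(I)/I·R(Q)`. -/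
noncomputable abbrev SallyModule (A : Type*) [CommRing A] (I Q : Ideal A) :=
  ↥(sallyIR A I) ⧸ Submodule.comap (sallyIR A I).subtype (sallyIT A I Q)

/-- The length of a module, as the Krull dimension of its submodule lattice. -/
noncomputable def moduleLength (A M : Type*) [CommRing A] [AddCommGroup M]
    [Module A M] : WithBot ℕ∞ :=
  Order.krullDim (Submodule A M)

/-- The degree `n` homogeneous component of the Sally module. -/
noncomputable def sallyComp (A : Type*) [CommRing A] (I Q : Ideal A) (n : ℕ) :
    Submodule A (SallyModule A I Q) :=
  Submodule.map (Submodule.mkQ _)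
    (Submodule.comap (sallyIR A I).subtype
      (Submodule.map (Polynomial.monomial n : A →ₗ[A] A[X]) (I ^ (n + 1))))

theorem Ideal.exists_add_notMem_of_finset_prime {A : Type*} [CommRing A] (S : Finset (Ideal A))
    (hS : ∀ p ∈ S, p.IsPrime) (x : A) (I : Ideal A)
    (h : ∀ p ∈ S, ¬ (Ideal.span {x} ⊔ I ≤ p)) :
    ∃ c ∈ I, ∀ p ∈ S, x + c ∉ p := by
  classical
  induction hn : S.card generalizing S with
  | zero =>
    obtain rfl := Finset.card_eq_zero.mp hn
    exact ⟨0, I.zero_mem, by simp⟩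
  | succ n ih =>
    obtain ⟨p, hp⟩ := S.exists_minimal (Finset.card_pos.mp (by lia))
    have hpS := hp.prop
    have hpp := hS p hpS
    obtain ⟨c, hc, hcS⟩ := ih (S.erase p) (fun q hq => hS q (Finset.mem_of_mem_erase hq))
      (fun q hq => h q (Finset.mem_of_mem_erase hq))
      (by rw [Finset.card_erase_of_mem hpS, hn, Nat.add_sub_cancel])
    by_cases hxc : x + c ∈ p
    · have hI : ¬ I ≤ p := fun hI => h p hpS <| sup_le
        ((Ideal.span_singleton_le_iff_mem _).mpr ((p.add_mem_iff_left (hI hc)).mp hxc)) hI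
      have hprod : ¬ I * ∏ q ∈ S.erase p, q ≤ p := by
        intro hle
        rcases (hpp.mul_le).mp hle with h1 | h1
        · exact hI h1
        · obtain ⟨q, hq, hqp⟩ := (hpp.prod_le).mp h1
          rw [Finset.mem_erase] at hq
          exact hq.1 (le_antisymm hqp (hp.le_of_le hq.2 hqp))
      obtain ⟨r, hr, hrp⟩ := SetLike.not_le_iff_exists.mp hprod
      refine ⟨c + r, I.add_mem hc (Ideal.mul_le_left hr), fun q hq => ?_⟩
      rw [← add_assoc]
      by_cases hqp : q = p
      · subst hqp
        exact fun hmem => hrp ((q.add_mem_iff_right hxc).mp hmem)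
      · have hq' := Finset.mem_erase.mpr ⟨hqp, hq⟩
        have hrq : r ∈ q := Finset.inf_le (f := id) hq' (Ideal.prod_le_inf (Ideal.mul_le_right hr))
        exact fun hmem => hcS q hq' ((q.add_mem_iff_left hrq).mp hmem)
    · refine ⟨c, hc, fun q hq => ?_⟩
      by_cases hqp : q = p
      · rwa [hqp]
      · exact hcS q (Finset.mem_erase.mpr ⟨hqp, hq⟩)

section WeaklyRegular

open RingTheory.Sequence
open scoped Pointwise

theorem eq_zero_of_forall_smul_eq_zero_quotSMulTop {A M : Type*} [CommRing A]
    [AddCommGroup M] [Module A M] {J : Ideal A} {x y : A}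
    (hyJ : y ∈ J) (hx : IsSMulRegular M x) (hy : IsSMulRegular M y)
    (h : ∀ v : QuotSMulTop y M, (∀ r ∈ J, r • v = 0) → v = 0)
    (v : QuotSMulTop x M) (hv : ∀ r ∈ J, r • v = 0) : v = 0 := by
  obtain ⟨m, rfl⟩ := Submodule.mkQ_surjective _ v
  have hm : ∀ r ∈ J, ∃ u : M, x • u = r • m := fun r hr => by
    have := hv r hr
    rw [← map_smul, Submodule.mkQ_apply, Submodule.Quotient.mk_eq_zero] at this
    obtain ⟨u, -, hu⟩ := this
    exact ⟨u, hu⟩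
  obtain ⟨w, hw⟩ := hm y hyJ
  have hw0 : Submodule.mkQ (y • (⊤ : Submodule A M)) w = 0 := by
    refine h _ fun r hr => ?_
    obtain ⟨u, hu⟩ := hm r hr
    rw [← map_smul, Submodule.mkQ_apply, Submodule.Quotient.mk_eq_zero]
    refine ⟨u, trivial, hx ?_⟩
    change x • y • u = x • r • w
    rw [smul_comm x y, hu, smul_comm x r, hw, smul_comm]
  rw [Submodule.mkQ_apply, Submodule.Quotient.mk_eq_zero] at hw0 ⊢
  obtain ⟨t, -, rfl⟩ := hw0
  refine ⟨t, trivial, hy ?_⟩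
  change y • x • t = y • m
  rw [← hw, smul_comm]
  rfl

variable {A M : Type*} [CommRing A] [IsLocalRing A] [IsNoetherianRing A]
  [AddCommGroup M] [Module A M] [Module.Finite A M]

theorem exists_isSMulRegular_mem_maximalIdeal
    (h : ∀ v : M, (∀ r ∈ maximalIdeal A, r • v = 0) → v = 0) :
    ∃ z ∈ maximalIdeal A, IsSMulRegular M z := by
  by_contra! hcon
  have hsub : (maximalIdeal A : Set A) ⊆ ⋃ p ∈ associatedPrimes A M, p := by
    rw [biUnion_associatedPrimes_eq_compl_regular A M]
    exact fun r hr => hcon r hr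
  obtain ⟨p, hp, hle⟩ := (Ideal.subset_union_prime_finite (f := id)
    (associatedPrimes.finite A M) ⊥ ⊥ fun _ hq _ _ => hq.isPrime).mp hsub
  obtain ⟨hpp, v, hv⟩ := Submodule.isAssociatedPrime_iff.mp hp
  have hv0 : v = 0 := h v fun r hr => by
    have := hle hr
    simp only [id] at this
    rw [hv, Submodule.mem_colon_singleton] at this
    simpa using this
  apply hpp.ne_top
  rw [hv, hv0, eq_top_iff]
  intro r _
  simp [Submodule.mem_colon_singleton]

theorem exists_isWeaklyRegular_cons_of_isSMulRegular (n : ℕ) :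
    ∀ (M : Type*) [AddCommGroup M] [Module A M] [Module.Finite A M] (ys : List A),
      ys.length = n + 1 → (∀ y ∈ ys, y ∈ maximalIdeal A) → IsWeaklyRegular M ys →
      ∀ x ∈ maximalIdeal A, IsSMulRegular M x →
      ∃ zs : List A, zs.length = n ∧ (∀ z ∈ zs, z ∈ maximalIdeal A) ∧
        IsWeaklyRegular M (x :: zs) := by
  induction n with
  | zero =>
    intro M _ _ _ ys _ _ _ x _ hreg
    exact ⟨[], rfl, by simp, by simpa using hreg⟩
  | succ n ih =>
    intro M _ _ _ ys hlen hys hwr x hx hreg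
    obtain ⟨y, y', t, rfl⟩ : ∃ y y' t, ys = y :: y' :: t := by
      match ys, hlen with
      | y :: y' :: t, _ => exact ⟨y, y', t, rfl⟩
    simp only [List.mem_cons, forall_eq_or_imp] at hys
    obtain ⟨hy, hy', ht⟩ := hys
    have hwr' := hwr
    rw [isWeaklyRegular_cons_iff] at hwr'
    obtain ⟨hyreg, hwr1⟩ := hwr'
    have hsocy : ∀ v : QuotSMulTop y M, (∀ r ∈ maximalIdeal A, r • v = 0) → v = 0 :=
      fun v hv => ((isWeaklyRegular_cons_iff _ _ _).mp hwr1).1.right_eq_zero_of_smul (hv y' hy')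
    have hsocx := eq_zero_of_forall_smul_eq_zero_quotSMulTop hy hreg hyreg hsocy
    obtain ⟨z, hz, hzreg⟩ := exists_isSMulRegular_mem_maximalIdeal
      (A := A) (M := QuotSMulTop x M × QuotSMulTop y M) fun v hv => Prod.ext
        (hsocx v.1 fun r hr => congrArg Prod.fst (hv r hr))
        (hsocy v.2 fun r hr => congrArg Prod.snd (hv r hr))
    have hzx : IsSMulRegular (QuotSMulTop x M) z :=
      hzreg.of_injective (LinearMap.inl A _ _) LinearMap.inl_injective
    have hzy : IsSMulRegular (QuotSMulTop y M) z :=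
      hzreg.of_injective (LinearMap.inr A _ _) LinearMap.inr_injective
    obtain ⟨t', hlen', ht', hwr'⟩ := ih (QuotSMulTop y M) (y' :: t) (by simpa using hlen)
      (by simpa using ⟨hy', ht⟩) hwr1 z hz hzy
    have hperm : IsWeaklyRegular M (z :: y :: t') :=
      IsLocalRing.isWeaklyRegular_of_perm_of_subset_maximalIdeal
        ((isWeaklyRegular_cons_iff M y _).mpr ⟨hyreg, hwr'⟩) (List.Perm.swap _ _ _)
        (by simpa using ⟨hy, hz, ht'⟩)
    have hzx' : IsWeaklyRegular M [z, x] :=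
      IsLocalRing.isWeaklyRegular_of_perm_of_subset_maximalIdeal
        ((isWeaklyRegular_cons_iff M x [z]).mpr ⟨hreg, by simpa using hzx⟩) (List.Perm.swap _ _ _)
        (by simpa using ⟨hx, hz⟩)
    rw [isWeaklyRegular_cons_iff] at hperm hzx'
    obtain ⟨u, hulen, hu, hwru⟩ := ih (QuotSMulTop z M) (y :: t') (by simpa using hlen')
      (by simpa using ⟨hy, ht'⟩) hperm.2 x hx (by simpa using hzx'.2)
    exact ⟨z :: u, by simpa using hulen, by simpa using ⟨hz, hu⟩,
      IsLocalRing.isWeaklyRegular_of_perm_of_subset_maximalIdeal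
        ((isWeaklyRegular_cons_iff M z _).mpr ⟨hperm.1, hwru⟩) (List.Perm.swap _ _ _)
        (by simpa using ⟨hz, hx, hu⟩)⟩

theorem exists_isWeaklyRegular_of_le_radical (n : ℕ) :
    ∀ (M : Type*) [AddCommGroup M] [Module A M] [Module.Finite A M] (ys : List A),
      ys.length = n → (∀ y ∈ ys, y ∈ maximalIdeal A) → IsWeaklyRegular M ys →
      ∀ (J : Ideal A) (as : List A), J ≤ Module.annihilator A M → as.length = n →
        (∀ a ∈ as, a ∈ maximalIdeal A) → maximalIdeal A ≤ (J ⊔ Ideal.ofList as).radical →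
      ∃ bs : List A, bs.length = n ∧ IsWeaklyRegular M bs ∧
        J ⊔ Ideal.ofList bs = J ⊔ Ideal.ofList as := by
  induction n with
  | zero =>
    intro M _ _ _ ys _ _ _ J as _ has _ _
    exact ⟨[], rfl, IsWeaklyRegular.nil A M, by rw [List.length_eq_zero_iff.mp has]⟩
  | succ n ih =>
    intro M _ _ _ ys hlen hys hwr J as hJ haslen has hrad
    obtain ⟨a, as, rfl⟩ : ∃ a t, as = a :: t := by
      match as, haslen with
      | a :: t, _ => exact ⟨a, t, rfl⟩
    simp only [List.mem_cons, forall_eq_or_imp] at has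
    have hsoc : ∀ v : M, (∀ r ∈ maximalIdeal A, r • v = 0) → v = 0 := by
      match ys, hlen with
      | y :: t, _ =>
        exact fun v hv => ((isWeaklyRegular_cons_iff _ _ _).mp hwr).1.right_eq_zero_of_smul
          (hv y (hys y (by simp)))
    have hfin := associatedPrimes.finite A M
    obtain ⟨c, hc, hcp⟩ := Ideal.exists_add_notMem_of_finset_prime hfin.toFinset
      (fun p hp => (hfin.mem_toFinset.mp hp).isPrime) a (Ideal.ofList as) (by
        intro p hp hle
        obtain ⟨hpp, v, hv⟩ := Submodule.isAssociatedPrime_iff.mp (hfin.mem_toFinset.mp hp)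
        have hJp : J ≤ p := by
          intro r hr
          rw [hv, Submodule.mem_colon_singleton]
          simpa using Module.mem_annihilator.mp (hJ hr) v
        have hmp : maximalIdeal A ≤ p := hrad.trans <| hpp.radical_le_iff.mpr <|
          sup_le hJp (by rwa [Ideal.ofList_cons])
        have hv0 : v = 0 := hsoc v fun r hr => by
          have := hmp hr
          rw [hv, Submodule.mem_colon_singleton] at this
          simpa using this
        apply hpp.ne_top
        rw [hv, hv0, eq_top_iff]
        intro r _
        simp [Submodule.mem_colon_singleton])
    have hreg : IsSMulRegular M (a + c) := by
      by_contra hcon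
      have : a + c ∈ ⋃ p ∈ associatedPrimes A M, (p : Set A) := by
        rw [biUnion_associatedPrimes_eq_compl_regular A M]
        exact hcon
      simp only [Set.mem_iUnion] at this
      obtain ⟨p, hp, hmem⟩ := this
      exact hcp p (hfin.mem_toFinset.mpr hp) hmem
    have hcm : a + c ∈ maximalIdeal A :=
      add_mem has.1 ((Ideal.span_le.mpr has.2 : Ideal.ofList as ≤ _) hc)
    obtain ⟨zs, hzlen, hzs, hwrz⟩ :=
      exists_isWeaklyRegular_cons_of_isSMulRegular n M ys hlen hys hwr _ hcm hreg
    have hspan : Ideal.span {a + c} ⊔ Ideal.ofList as = Ideal.span {a} ⊔ Ideal.ofList as := by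
      apply le_antisymm <;> refine sup_le ?_ le_sup_right <;>
        rw [Ideal.span_singleton_le_iff_mem]
      · exact add_mem (Ideal.mem_sup_left (Ideal.mem_span_singleton_self a))
          (Ideal.mem_sup_right hc)
      · have := sub_mem (Ideal.mem_sup_left (T := Ideal.ofList as)
          (Ideal.mem_span_singleton_self (a + c))) (Ideal.mem_sup_right hc)
        rwa [add_sub_cancel_right] at this
    have hsup : J ⊔ Ideal.span {a + c} ⊔ Ideal.ofList as = J ⊔ Ideal.ofList (a :: as) := by
      rw [sup_assoc, hspan, Ideal.ofList_cons]
    obtain ⟨bs, hblen, hbwr, hbs⟩ := ih (QuotSMulTop (a + c) M) zs hzlen hzs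
      ((isWeaklyRegular_cons_iff _ _ _).mp hwrz).2 (J ⊔ Ideal.span {a + c}) as
      (sup_le (hJ.trans (LinearMap.annihilator_le_of_surjective _ (Submodule.mkQ_surjective _)))
        ((Ideal.span_singleton_le_iff_mem _).mpr (QuotSMulTop.mem_annihilator _ _)))
      (by simpa using haslen) has.2 (by rwa [hsup])
    refine ⟨(a + c) :: bs, by simpa using hblen,
      (isWeaklyRegular_cons_iff _ _ _).mpr ⟨hreg, hbwr⟩, ?_⟩
    rw [Ideal.ofList_cons, ← sup_assoc, hbs, hsup]

end WeaklyRegular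

section PowersOfRegularSequence

open RingTheory.Sequence

variable {A : Type*} [CommRing A]

theorem Ideal.mem_mul_span_range_iff {ι : Type*} [Fintype ι] {I : Ideal A} {g : ι → A} {x : A} :
    x ∈ I * Ideal.span (Set.range g) ↔ ∃ c : ι → A, (∀ i, c i ∈ I) ∧ ∑ i, c i * g i = x := by
  rw [← smul_eq_mul, Ideal.span, Submodule.mem_ideal_smul_span_iff_exists_sum]
  constructor
  · rintro ⟨c, hc, rfl⟩
    exact ⟨c, hc, by simp [Finsupp.sum_fintype]⟩
  · rintro ⟨c, hc, rfl⟩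
    exact ⟨Finsupp.equivFunOnFinite.symm c, hc, by simp [Finsupp.sum_fintype]⟩

/-- `g` generates `K`, and every relation among the entries of `g` has all its coefficients
in `Q`. -/
def IsIndependentModulo {ι : Type*} [Fintype ι] (Q K : Ideal A) (g : ι → A) : Prop :=
  Ideal.span (Set.range g) = K ∧ ∀ c : ι → A, ∑ i, c i * g i = 0 → ∀ i, c i ∈ Q

theorem IsIndependentModulo.mem_of_sum_mem_mul {ι : Type*} [Fintype ι] {Q K I : Ideal A}
    {g : ι → A} (hg : IsIndependentModulo Q K g) (hQI : Q ≤ I) {c : ι → A}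
    (hc : ∑ i, c i * g i ∈ I * K) (i : ι) : c i ∈ I := by
  rw [← hg.1, Ideal.mem_mul_span_range_iff] at hc
  obtain ⟨e, he, hsum⟩ := hc
  have := hg.2 (c - e) (by simp [sub_mul, Finset.sum_sub_distrib, hsum]) i
  simpa using add_mem (hQI this) (he i)

theorem IsIndependentModulo.exists_sum_eq {ι : Type*} [Fintype ι] {Q K : Ideal A}
    {g : ι → A} (hg : IsIndependentModulo Q K g) {x : A} (hx : x ∈ K) :
    ∃ c : ι → A, ∑ i, c i * g i = x := by
  rw [← hg.1] at hx
  simpa using Ideal.mem_span_range_iff_exists_fun.mp hx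

theorem mem_pow_of_mul_mem_pow {J : Ideal A} {x : A}
    (hJ : ∀ n, ∃ (ι : Type) (_ : Fintype ι) (g : ι → A), IsIndependentModulo J (J ^ n) g)
    (hx : ∀ y, x * y ∈ J → y ∈ J) (n : ℕ) {y : A} (hy : x * y ∈ J ^ n) : y ∈ J ^ n := by
  induction n generalizing y with
  | zero => simp
  | succ n ih =>
    obtain ⟨ι, _, g, hg⟩ := hJ n
    obtain ⟨c, rfl⟩ := hg.exists_sum_eq (ih (Ideal.pow_le_pow_right n.le_succ hy))
    rw [pow_succ', ← hg.1, Ideal.mem_mul_span_range_iff]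
    refine ⟨c, fun i => hx _ ?_, rfl⟩
    refine hg.mem_of_sum_mem_mul le_rfl (c := fun i => x * c i) ?_ i
    rwa [← pow_succ', Finset.sum_congr rfl fun i _ => mul_assoc x (c i) (g i), ← Finset.mul_sum]

theorem Ideal.sup_span_singleton_pow_succ (J : Ideal A) (x : A) (n : ℕ) :
    (J ⊔ Ideal.span {x}) ^ (n + 1) = J ^ (n + 1) ⊔ Ideal.span {x} * (J ⊔ Ideal.span {x}) ^ n := by
  apply le_antisymm
  · induction n with
    | zero => simp
    | succ n ih =>
      conv_lhs => rw [pow_succ', Ideal.sup_mul]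
      refine sup_le ?_ le_sup_right
      refine (Ideal.mul_mono_right ih).trans ?_
      rw [Ideal.mul_sup, ← pow_succ']
      refine sup_le_sup_left ?_ _
      rw [mul_left_comm, pow_succ' (J ⊔ _) n]
      exact Ideal.mul_mono_right (Ideal.mul_mono_left le_sup_left)
  · refine sup_le (Ideal.pow_right_mono le_sup_left _) ?_
    rw [pow_succ']
    exact Ideal.mul_mono_left le_sup_right

theorem exists_isIndependentModulo_pow_sup {J : Ideal A} {x : A} {r : ℕ}
    (hJ : ∀ n, ∃ (ι : Type) (_ : Fintype ι) (g : ι → A),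
      Fintype.card ι = Nat.multichoose r n ∧ IsIndependentModulo J (J ^ n) g)
    (hx : ∀ y, x * y ∈ J → y ∈ J) (n : ℕ) :
    ∃ (ι : Type) (_ : Fintype ι) (g : ι → A), Fintype.card ι = Nat.multichoose (r + 1) n ∧
      IsIndependentModulo (J ⊔ Ideal.span {x}) ((J ⊔ Ideal.span {x}) ^ n) g := by
  induction n with
  | zero =>
    obtain ⟨ι, _, g, hcard, hg⟩ := hJ 0
    refine ⟨ι, inferInstance, g, by simpa using hcard, by simpa using hg.1, fun c hc i => ?_⟩
    exact le_sup_left (a := J) (hg.2 c hc i)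
  | succ n ih =>
    obtain ⟨ι, _, g, hcard, hg⟩ := hJ (n + 1)
    obtain ⟨κ, _, f, hcard', hf⟩ := ih
    refine ⟨ι ⊕ κ, inferInstance, Sum.elim g fun k => x * f k, ?_, ?_, ?_⟩
    · rw [Fintype.card_sum, hcard, hcard', Nat.multichoose_succ_succ]
    · rw [Set.Sum.elim_range, Ideal.span_union, hg.1, Ideal.sup_span_singleton_pow_succ, ← hf.1,
        Ideal.span_mul_span', Set.singleton_mul, ← Set.range_comp]
      rfl
    · intro c hc
      simp only [Fintype.sum_sum_type, Sum.elim_inl, Sum.elim_inr] at hc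
      set q := ∑ k, c (Sum.inr k) * f k with hq
      have hxq : ∑ k, c (Sum.inr k) * (x * f k) = x * q := by
        rw [hq, Finset.mul_sum]
        exact Finset.sum_congr rfl fun k _ => mul_left_comm _ _ _
      rw [hxq] at hc
      have hqJ : q ∈ J ^ (n + 1) := by
        refine mem_pow_of_mul_mem_pow
          (fun n => (hJ n).imp fun _ h => h.imp fun _ h => h.imp fun _ h => h.2) hx _ ?_
        rw [eq_neg_of_add_eq_zero_right hc, ← hg.1]
        exact neg_mem (sum_mem fun i _ => Ideal.mul_mem_left _ _ (Ideal.subset_span ⟨i, rfl⟩))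
      rintro (i | k)
      · obtain ⟨h, hh⟩ := hg.exists_sum_eq hqJ
        have := hg.2 (fun i => c (Sum.inl i) + x * h i) (by
          rw [← hc, ← hh, Finset.mul_sum, ← Finset.sum_add_distrib]
          exact Finset.sum_congr rfl fun i _ => by ring) i
        have hxh : x * h i ∈ J ⊔ Ideal.span {x} := Ideal.mem_sup_right
          (Ideal.mul_mem_right _ _ (Ideal.mem_span_singleton_self x))
        exact ((J ⊔ Ideal.span {x}).add_mem_iff_left hxh).mp (Ideal.mem_sup_left this)
      · refine hf.mem_of_sum_mem_mul le_rfl (c := fun k => c (Sum.inr k)) ?_ k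
        rw [pow_succ'] at hqJ
        exact Ideal.mul_mono le_sup_left (Ideal.pow_right_mono le_sup_left _) hqJ

theorem RingTheory.Sequence.IsWeaklyRegular.exists_isIndependentModulo_pow (as : List A)
    (has : IsWeaklyRegular A as) (n : ℕ) :
    ∃ (ι : Type) (_ : Fintype ι) (g : ι → A), Fintype.card ι = Nat.multichoose as.length n ∧
      IsIndependentModulo (Ideal.ofList as) (Ideal.ofList as ^ n) g := by
  induction as using List.reverseRecOn generalizing n with
  | nil =>
    cases n with
    | zero => exact ⟨Unit, inferInstance, fun _ => 1, by simp, by simp, fun c hc _ => by simpa using hc⟩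
    | succ n =>
      exact ⟨Empty, inferInstance, Empty.elim, by simp, by simp, fun _ _ i => i.elim⟩
  | append_singleton as x ih =>
    rw [isWeaklyRegular_append_iff, isWeaklyRegular_singleton_iff,
      isSMulRegular_quotient_iff_mem_of_smul_mem] at has
    rw [Ideal.ofList_append, Ideal.ofList_singleton, List.length_append, List.length_singleton]
    exact exists_isIndependentModulo_pow_sup (ih has.1) (by simpa using has.2) n

end PowersOfRegularSequence

section Length

variable {A : Type*} [CommRing A]

theorem length_quotient_eq_add_of_le {K L : Ideal A} (h : K ≤ L) :
    Module.length A (A ⧸ K) =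
      Module.length A (L ⧸ Submodule.comap L.subtype K) + Module.length A (A ⧸ L) := by
  refine Module.length_eq_add_of_exact (Submodule.mapQ _ K L.subtype le_rfl)
    (Submodule.factor h) ?_ (Submodule.factor_surjective h) ?_
  · rw [← LinearMap.ker_eq_bot, Submodule.ker_mapQ]
    simp
  · rw [LinearMap.exact_iff, Submodule.range_mapQ, Submodule.factor, Submodule.ker_mapQ]
    simp

theorem length_quotient_antitone {K L : Ideal A} (h : K ≤ L) :
    Module.length A (A ⧸ L) ≤ Module.length A (A ⧸ K) :=
  Module.length_le_of_surjective _ (Submodule.factor_surjective h)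

theorem IsIndependentModulo.length_quotient_mul {ι : Type*} [Fintype ι] {Q K I : Ideal A}
    {g : ι → A} (hg : IsIndependentModulo Q K g) (hQI : Q ≤ I) :
    Module.length A (A ⧸ I * K) =
      Fintype.card ι * Module.length A (A ⧸ I) + Module.length A (A ⧸ K) := by
  have hgK (i : ι) : g i ∈ K := hg.1 ▸ Ideal.subset_span ⟨i, rfl⟩
  let f : (ι → A ⧸ I) →ₗ[A] A ⧸ I * K := ∑ i,
    (Submodule.mapQ I (I * K) (LinearMap.mulRight A (g i))
      fun a ha => Ideal.mul_mem_mul ha (hgK i)) ∘ₗ LinearMap.proj i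
  have hf (c : ι → A) : f (fun i => Submodule.Quotient.mk (c i)) =
      Submodule.Quotient.mk (∑ i, c i * g i) := by
    simp only [f, LinearMap.sum_apply]
    exact (map_sum (Submodule.mkQ (I * K)) (fun i => c i * g i) Finset.univ).symm
  have hlift (v : ι → A ⧸ I) : ∃ c : ι → A, v = fun i => Submodule.Quotient.mk (c i) := by
    choose c hc using fun i => Submodule.Quotient.mk_surjective I (v i)
    exact ⟨c, funext fun i => (hc i).symm⟩
  rw [Module.length_eq_add_of_exact f (Submodule.factor (Ideal.mul_le_right : I * K ≤ K)) ?_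
    (Submodule.factor_surjective _) ?_]
  · simp
  · rw [← LinearMap.ker_eq_bot, LinearMap.ker_eq_bot']
    intro v hv
    obtain ⟨c, rfl⟩ := hlift v
    rw [hf, Submodule.Quotient.mk_eq_zero] at hv
    exact funext fun i => (Submodule.Quotient.mk_eq_zero I).mpr (hg.mem_of_sum_mem_mul hQI hv i)
  · intro y
    obtain ⟨y, rfl⟩ := Submodule.Quotient.mk_surjective _ y
    rw [← Submodule.mkQ_apply, Submodule.factor_mk, Submodule.mkQ_apply, Submodule.mkQ_apply,
      Submodule.Quotient.mk_eq_zero]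
    constructor
    · intro hy
      obtain ⟨c, rfl⟩ := hg.exists_sum_eq hy
      exact ⟨_, hf c⟩
    · rintro ⟨v, hv⟩
      obtain ⟨c, rfl⟩ := hlift v
      rw [hf, Submodule.Quotient.eq] at hv
      exact (K.sub_mem_iff_right (sum_mem fun i _ => K.mul_mem_left _ (hgK i))).mp
        (Ideal.mul_le_right hv)

open RingTheory.Sequence in
theorem RingTheory.Sequence.IsWeaklyRegular.length_quotient_mul_pow {as : List A}
    (has : IsWeaklyRegular A as) {I : Ideal A} (hI : Ideal.ofList as ≤ I) (n : ℕ) :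
    Module.length A (A ⧸ I * Ideal.ofList as ^ n) =
      Nat.multichoose as.length n * Module.length A (A ⧸ I) +
        Module.length A (A ⧸ Ideal.ofList as ^ n) := by
  obtain ⟨ι, _, g, hcard, hg⟩ := has.exists_isIndependentModulo_pow as n
  rw [hg.length_quotient_mul hI, hcard]

theorem Nat.multichoose_succ_add_choose (d n : ℕ) :
    (d + 1).multichoose n + (n + d).choose (d + 1) = (n + (d + 1)).choose (d + 1) := by
  rw [Nat.multichoose_eq, show d + 1 + n - 1 = n + d by lia, ← add_assoc n d 1,
    Nat.choose_succ_succ (n + d) d, Nat.choose_symm_add]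

open RingTheory.Sequence in
theorem RingTheory.Sequence.IsWeaklyRegular.length_quotient_pow {as : List A} {d : ℕ}
    (has : IsWeaklyRegular A as) (hd : as.length = d + 1) (n : ℕ) :
    Module.length A (A ⧸ Ideal.ofList as ^ n) =
      (n + d).choose (d + 1) * Module.length A (A ⧸ Ideal.ofList as) := by
  induction n with
  | zero =>
    have : Subsingleton (A ⧸ Ideal.ofList as ^ 0) := by
      rw [pow_zero, Ideal.one_eq_top]
      exact Submodule.Quotient.subsingleton_iff.mpr rfl
    simp [Module.length_eq_zero]
  | succ n ih =>
    rw [pow_succ', has.length_quotient_mul_pow le_rfl, ih, ← add_mul, hd,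
      ← Nat.cast_add, Nat.multichoose_succ_add_choose, add_right_comm, add_assoc n d 1]

end Length

section Sally

variable {A : Type*} [CommRing A]

theorem coeff_mem_of_mem_smul_reesAlgebra {I Q : Ideal A} {p : A[X]}
    (hp : p ∈ I • Subalgebra.toSubmodule (reesAlgebra Q)) (n : ℕ) :
    p.coeff n ∈ I * Q ^ n := by
  induction hp using Submodule.smul_induction_on' with
  | smul r hr f hf =>
    rw [coeff_smul, smul_eq_mul]
    exact Ideal.mul_mem_mul hr ((mem_reesAlgebra_iff Q f).mp hf n)
  | add f _ g _ hf hg =>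
    rw [coeff_add]
    exact add_mem hf hg

theorem monomial_mem_smul_reesAlgebra_iff {I Q : Ideal A} {n : ℕ} {c : A} :
    monomial n c ∈ I • Subalgebra.toSubmodule (reesAlgebra Q) ↔ c ∈ I * Q ^ n := by
  refine ⟨fun h => by simpa using coeff_mem_of_mem_smul_reesAlgebra h n, fun h => ?_⟩
  induction h using Submodule.mul_induction_on' with
  | mem_mul_mem r hr b hb =>
    rw [← smul_eq_mul, ← smul_monomial]
    exact Submodule.smul_mem_smul hr (reesAlgebra.monomial_mem.mpr hb)
  | add x _ y _ hx hy =>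
    rw [map_add]
    exact add_mem hx hy

theorem length_sallyComp (I Q : Ideal A) (n : ℕ) :
    Module.length A (sallyComp A I Q n) =
      Module.length A
        (↥(I ^ (n + 1)) ⧸ Submodule.comap (I ^ (n + 1)).subtype (I * Q ^ n)) := by
  have hmem (c : ↥(I ^ (n + 1))) : monomial n (c : A) ∈ sallyIR A I :=
    monomial_mem_smul_reesAlgebra_iff.mpr (pow_succ' I n ▸ c.2)
  let φ : ↥(I ^ (n + 1)) →ₗ[A] SallyModule A I Q :=
    Submodule.mkQ _ ∘ₗ
      ((monomial n : A →ₗ[A] A[X]) ∘ₗ (I ^ (n + 1)).subtype).codRestrict (sallyIR A I) hmem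
  have hrange : LinearMap.range φ = sallyComp A I Q n := by
    rw [LinearMap.range_comp, sallyComp]
    congr 1
    ext ⟨p, hp⟩
    simp only [LinearMap.mem_range, Subtype.ext_iff, Submodule.mem_comap, Submodule.mem_map,
      Submodule.subtype_apply, Subtype.exists]
    exact exists_congr fun _ => ⟨fun ⟨hx, h⟩ => ⟨hx, h⟩, fun ⟨hx, h⟩ => ⟨hx, h⟩⟩
  have hker : LinearMap.ker φ = Submodule.comap (I ^ (n + 1)).subtype (I * Q ^ n) := by
    ext c
    rw [LinearMap.mem_ker, LinearMap.comp_apply, Submodule.mkQ_apply,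
      Submodule.Quotient.mk_eq_zero]
    exact monomial_mem_smul_reesAlgebra_iff
  rw [← hrange, ← hker]
  exact φ.quotKerEquivRange.symm.length_eq

theorem length_quotient_mul_pow_eq_sallyComp_add {I Q : Ideal A} (hQI : Q ≤ I) (n : ℕ) :
    Module.length A (A ⧸ I * Q ^ n) =
      Module.length A (sallyComp A I Q n) + Module.length A (A ⧸ I ^ (n + 1)) := by
  rw [length_sallyComp]
  apply length_quotient_eq_add_of_le
  rw [pow_succ']
  exact Ideal.mul_mono_right (Ideal.pow_right_mono hQI n)

end Sally

section Numerical

theorem Nat.choose_add_succ_le (d r n : ℕ) :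
    (n + r + (d + 1)).choose (d + 1) ≤
      (n + (d + 1)).choose (d + 1) + r * (n + r + d).choose d := by
  induction r with
  | zero => simp
  | succ r ih =>
    have h1 : (n + (r + 1) + (d + 1)).choose (d + 1) =
        (n + (r + 1) + d).choose d + (n + r + (d + 1)).choose (d + 1) := by
      rw [← add_assoc (n + (r + 1)) d 1, Nat.choose_succ_succ]
      congr 2
      lia
    have h2 : (n + r + d).choose d ≤ (n + (r + 1) + d).choose d :=
      Nat.choose_le_choose _ (by lia)
    have h3 : r * (n + r + d).choose d ≤ r * (n + (r + 1) + d).choose d :=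
      Nat.mul_le_mul_left _ h2
    rw [h1, add_mul, one_mul]
    lia

theorem Nat.choose_add_sub_le (d n i : ℕ) :
    (n + (d + 1) - (i + 1)).choose (d + 1 - (i + 1)) ≤ (n + d).choose d := by
  rcases le_total i d with h | h
  · obtain ⟨k, rfl⟩ := Nat.exists_eq_add_of_le h
    rw [show n + (i + k + 1) - (i + 1) = n + k by lia, show i + k + 1 - (i + 1) = k by lia,
      Nat.choose_symm_add.symm, (Nat.choose_symm_add (a := n) (b := i + k)).symm]
    exact Nat.choose_le_choose _ (by lia)
  · rw [show d + 1 - (i + 1) = 0 by lia, Nat.choose_zero_right]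
    exact Nat.choose_pos (by lia)

theorem eq_of_forall_abs_mul_choose_le {d : ℕ} {a C : ℤ} {N : ℕ}
    (h : ∀ n ≥ N, |a| * ((n + (d + 1)).choose (d + 1) : ℤ) ≤ C * ((n + d).choose d : ℤ)) :
    a = 0 := by
  by_contra ha
  have ha' : 1 ≤ |a| := Int.one_le_abs ha
  set n := N + (|C| * (d + 1)).toNat with hn
  have h1 := h n (by lia)
  have h2 : ((n + (d + 1) : ℕ) : ℤ) * ((n + d).choose d : ℤ) =
      ((n + (d + 1)).choose (d + 1) : ℤ) * (d + 1) := by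
    exact_mod_cast Nat.add_one_mul_choose_eq (n + d) d
  have h3 : (0 : ℤ) < ((n + d).choose d : ℤ) := by
    exact_mod_cast Nat.choose_pos (by lia)
  have h4 : |a| * ((n + (d + 1) : ℕ) : ℤ) ≤ C * (d + 1) := by
    refine le_of_mul_le_mul_right ?_ h3
    calc _ = |a| * ((n + (d + 1)).choose (d + 1) : ℤ) * (d + 1) := by rw [mul_assoc, h2, mul_assoc]
      _ ≤ C * ((n + d).choose d : ℤ) * (d + 1) := by gcongr
      _ = _ := by ring
  have h5 : C * (d + 1) ≤ |C| * (d + 1) := by gcongr; exact le_abs_self C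
  have h6 : |C| * (d + 1) ≤ n := by
    rw [hn]
    push_cast
    have := Int.self_le_toNat (|C| * (d + 1))
    lia
  have h7 : ((n + (d + 1) : ℕ) : ℤ) ≤ |a| * ((n + (d + 1) : ℕ) : ℤ) :=
    le_mul_of_one_le_left (by positivity) ha'
  push_cast at h7 h4
  linarith

/-- If a function `H` agrees eventually with a Hilbert polynomial having coefficients `e`, and
differs from `q * (n + d + 1).choose (d + 1)` by at most a multiple of `(n + d).choose d`, then
`q` is the leading coefficient `e 0`. -/
theorem leadingCoeff_eq_of_abs_sub_le {d : ℕ} {H : ℕ → ℕ} {e : ℕ → ℤ} {N r : ℕ} {q C : ℤ}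
    (hHS : ∀ n ≥ N, (H n : ℤ) = ∑ i ∈ Finset.range (d + 1 + 1),
      (-1) ^ i * e i * ((n + (d + 1) - i).choose (d + 1 - i) : ℤ))
    (hq : ∀ n ≥ r, |(H n : ℤ) - q * ((n + (d + 1)).choose (d + 1) : ℤ)| ≤
      C * ((n + d).choose d : ℤ)) : e 0 = q := by
  refine sub_eq_zero.mp <| eq_of_forall_abs_mul_choose_le (d := d) (N := max N r)
    (C := C + ∑ i ∈ Finset.range (d + 1), |e (i + 1)|) fun n hn => ?_
  have h1 := hHS n (le_of_max_le_left hn)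
  have h2 := hq n (le_of_max_le_right hn)
  rw [Finset.sum_range_succ'] at h1
  simp only [pow_zero, one_mul, Nat.sub_zero] at h1
  have h3 : |∑ i ∈ Finset.range (d + 1), (-1) ^ (i + 1) * e (i + 1) *
      ((n + (d + 1) - (i + 1)).choose (d + 1 - (i + 1)) : ℤ)| ≤
      (∑ i ∈ Finset.range (d + 1), |e (i + 1)|) * ((n + d).choose d : ℤ) := by
    rw [Finset.sum_mul]
    refine (Finset.abs_sum_le_sum_abs _ _).trans (Finset.sum_le_sum fun i _ => ?_)
    rw [abs_mul, abs_mul, abs_pow, abs_neg, abs_one, one_pow, one_mul, Nat.abs_cast]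
    gcongr
    exact Nat.choose_add_sub_le d n i
  rw [add_mul, ← Nat.abs_cast ((n + (d + 1)).choose (d + 1)), ← abs_mul]
  refine le_trans ?_ (add_le_add h2 h3)
  refine le_trans (le_of_eq ?_) (abs_sub _ _)
  congr 1
  rw [h1]
  ring

end Numerical

section Multiplicity

open RingTheory.Sequence

variable {A : Type*} [CommRing A]

theorem coe_moduleLength_eq {M : Type*} [AddCommGroup M] [Module A M] {k : ℕ}
    (h : moduleLength A M = (k : ℕ∞)) : Module.length A M = k := by
  rw [moduleLength, ← Module.coe_length] at h
  exact_mod_cast h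

theorem IsCohenMacaulayLocal.exists_isWeaklyRegular_ofList_eq [IsLocalRing A] [IsNoetherianRing A]
    {d : ℕ} (hCM : IsCohenMacaulayLocal A d) {a : Fin d → A}
    (ha : ∀ i, a i ∈ maximalIdeal A)
    (hrad : maximalIdeal A ≤ (Ideal.span (Set.range a)).radical) :
    ∃ as : List A, as.length = d ∧ IsWeaklyRegular A as ∧
      Ideal.ofList as = Ideal.span (Set.range a) := by
  obtain ⟨-, ys, hlen, hys, hreg⟩ := hCM
  have hofList : Ideal.ofList (List.ofFn a) = Ideal.span (Set.range a) := by
    simp [Ideal.ofList, List.mem_ofFn', Set.range]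
  obtain ⟨as, haslen, has, hspan⟩ := exists_isWeaklyRegular_of_le_radical d A ys hlen hys
    hreg.toIsWeaklyRegular ⊥ (List.ofFn a) bot_le (by simp) (by simpa using ha)
    (by rwa [bot_sup_eq, hofList])
  exact ⟨as, haslen, has, by simpa [hofList] using hspan⟩

theorem pow_add_eq_pow_mul_of_pow_succ_eq {I Q : Ideal A} {r : ℕ} (h : I ^ (r + 1) = Q * I ^ r)
    (n : ℕ) : I ^ (n + r) = Q ^ n * I ^ r := by
  induction n with
  | zero => simp
  | succ n ih =>
    rw [show n + 1 + r = (n + r) + 1 by lia, pow_succ, ih, mul_assoc, ← pow_succ, h, ← mul_assoc,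
      ← pow_succ]

end Multiplicity

/-- `ℓ_A(A/I^{n+1}) = e₀·C(n+d,d) - (e₀ - ℓ_A(A/I))·C(n+d-1,d-1) - ℓ_A(S_n)` for all
`n ≥ 0`, where `e₀ = e₀(I)` and `S_n` is the degree `n` part of the Sally module.
The Hilbert coefficients `e i` are specified by the Hilbert–Samuel polynomial. -/
theorem hilbert_function_via_sally (A : Type*) [CommRing A] [IsLocalRing A]
    [IsNoetherianRing A] [Infinite (ResidueField A)]
    (d : ℕ) (hd : 0 < d) (hCM : IsCohenMacaulayLocal A d)
    (I Q : Ideal A) (hI : IsPrimaryToMax A I)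
    (a : Fin d → A) (hQ : Q = Ideal.span (Set.range a)) (hQI : Q ≤ I)
    (hred : ∃ r : ℕ, I ^ (r + 1) = Q * I ^ r)
    (H s : ℕ → ℕ)
    (hH : ∀ n : ℕ, moduleLength A (A ⧸ I ^ (n + 1)) = (H n : ℕ∞))
    (hs : ∀ n : ℕ, moduleLength A ↥(sallyComp A I Q n) = (s n : ℕ∞))
    (e : ℕ → ℤ) (N : ℕ)
    (hHS : ∀ n ≥ N, (H n : ℤ) =
      ∑ i ∈ Finset.range (d + 1),
        (-1) ^ i * e i * ((n + d - i).choose (d - i) : ℤ)) :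
    ∀ n : ℕ, (H n : ℤ) =
      e 0 * ((n + d).choose d : ℤ) -
        (e 0 - (H 0 : ℤ)) * ((n + d - 1).choose (d - 1) : ℤ) - (s n : ℤ) := by
  obtain ⟨d, rfl⟩ := Nat.exists_eq_add_of_le' hd
  obtain ⟨r, hr⟩ := hred
  have hpow := pow_add_eq_pow_mul_of_pow_succ_eq hr
  have hIQ : I ^ (r + 1) ≤ Q := hr ▸ Ideal.mul_le_left
  have hrad : maximalIdeal A ≤ (Ideal.span (Set.range a)).radical := by
    rw [← hQ]
    refine hI.2.trans ?_
    rw [← Ideal.radical_pow I r.succ_ne_zero]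
    exact Ideal.radical_mono hIQ
  obtain ⟨as, hlen, hreg, hspan⟩ := hCM.exists_isWeaklyRegular_ofList_eq
    (fun i => hI.1 (hQI (hQ ▸ Ideal.subset_span ⟨i, rfl⟩))) hrad
  rw [← hQ] at hspan
  replace hH (n : ℕ) : Module.length A (A ⧸ I ^ (n + 1)) = H n := coe_moduleLength_eq (hH n)
  replace hs (n : ℕ) : Module.length A (sallyComp A I Q n) = s n := coe_moduleLength_eq (hs n)
  have hlenQ : Module.length A (A ⧸ Q) ≠ ⊤ :=
    ((length_quotient_antitone hIQ).trans_lt (by rw [hH]; exact ENat.natCast_lt_top _)).ne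
  obtain ⟨q, hq⟩ := ENat.ne_top_iff_exists.mp hlenQ
  have hQpow (n : ℕ) : Module.length A (A ⧸ Q ^ n) = ((n + d).choose (d + 1) * q : ℕ) := by
    rw [← hspan, hreg.length_quotient_pow hlen, hspan, ← hq, Nat.cast_mul]
  have hmain (n : ℕ) :
      (d + 1).multichoose n * H 0 + (n + d).choose (d + 1) * q = s n + H n := by
    have h1 := length_quotient_mul_pow_eq_sallyComp_add hQI n
    have h2 := hreg.length_quotient_mul_pow (I := I) (hspan ▸ hQI) n
    have h3 := hH 0
    rw [zero_add, pow_one] at h3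
    rw [hspan, hlen, h1, hs, hH, h3, hQpow] at h2
    exact_mod_cast h2.symm
  have hupper (n : ℕ) : H n ≤ (n + (d + 1)).choose (d + 1) * q := by
    have h := length_quotient_antitone (Ideal.pow_right_mono hQI (n + 1))
    rw [hH, hQpow, add_right_comm, add_assoc n d 1] at h
    exact_mod_cast h
  have hlower (n : ℕ) : (n + (d + 1)).choose (d + 1) * q ≤ H (n + r) := by
    have h : Module.length A (A ⧸ Q ^ (n + 1)) ≤ Module.length A (A ⧸ I ^ (n + r + 1)) := by
      refine length_quotient_antitone ?_
      rw [add_right_comm, hpow]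
      exact Ideal.mul_le_left
    rw [hH, hQpow, add_right_comm, add_assoc n d 1] at h
    exact_mod_cast h
  have he : e 0 = q := by
    refine leadingCoeff_eq_of_abs_sub_le (r := r) (C := r * q) hHS fun n hn => ?_
    obtain ⟨k, rfl⟩ := Nat.exists_eq_add_of_le' hn
    have h1 := hupper (k + r)
    have h2 := hlower k
    have h3 := Nat.mul_le_mul_right q (Nat.choose_add_succ_le d r k)
    zify at h1 h2 h3
    rw [abs_sub_comm, abs_of_nonneg (by linarith)]
    linarith
  intro n
  have h1 := hmain n
  have h2 := Nat.multichoose_succ_add_choose d n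
  have h3 : (d + 1).multichoose n = (n + d).choose d := by
    rw [Nat.multichoose_eq, show d + 1 + n - 1 = n + d by lia, Nat.choose_symm_add]
  rw [h3] at h1 h2
  rw [he, ← add_assoc n d 1, Nat.add_sub_cancel, Nat.add_sub_cancel, add_assoc n d 1, ← h2]
  zify at h1
  push_cast
  linarith
end

section
/- Let $(A, \mathfrak{m})$ be a Cohen-Macaulay local ring of dimension $d > 0$ with infinite residue field and $I$ an $\mathfrak{m}$-primary ideal with Hilbert coefficients $e_0, e_1$. Then $e_1 \geq e_0 - \ell_A(A/I)$ (Northcott's inequality). -/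
open IsLocalRing

/-- A nontrivial module over a local ring with infinite residue field is infinite. -/
lemma infinite_of_nontrivial_of_infinite_residueField {A M : Type*} [CommRing A] [IsLocalRing A]
    [Infinite (ResidueField A)] [AddCommGroup M] [Module A M] [Nontrivial M] : Infinite M := by
  by_contra h
  rw [not_infinite_iff_finite] at h
  obtain ⟨z, hz⟩ := exists_ne (0 : M)
  have hker : (LinearMap.toSpanSingleton A M z).ker ≤ maximalIdeal A := by
    refine le_maximalIdeal fun htop => hz ?_
    have : (1 : A) ∈ (LinearMap.toSpanSingleton A M z).ker := htop ▸ Submodule.mem_top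
    simpa using this
  have : Finite (A ⧸ (LinearMap.toSpanSingleton A M z).ker) :=
    Finite.of_equiv _ (LinearMap.quotKerEquivRange (LinearMap.toSpanSingleton A M z)).symm.toEquiv
  have : Finite (ResidueField A) :=
    Finite.of_surjective (Ideal.Quotient.factor hker) (Ideal.Quotient.factor_surjective hker)
  exact not_finite (ResidueField A)

/-- A module over a local ring with infinite residue field is not a finite union of proper
submodules. -/
lemma exists_forall_notMem_of_infinite_residueField {A M : Type*} [CommRing A] [IsLocalRing A]
    [Infinite (ResidueField A)] [AddCommGroup M] [Module A M] (S : Finset (Submodule A M))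
    (hS : ∀ N ∈ S, N ≠ ⊤) : ∃ x, ∀ N ∈ S, x ∉ N := by
  by_contra! h
  obtain ⟨N, hN, hfi⟩ := Submodule.exists_finiteIndex_of_cover (p := id) (s := S)
    (Set.eq_univ_of_forall fun x => by simpa using h x)
  simp only [id] at hfi
  have : Finite (M ⧸ N) := AddSubgroup.finite_quotient_of_finiteIndex (H := N.toAddSubgroup)
  have : Nontrivial (M ⧸ N) := Submodule.Quotient.nontrivial_iff.mpr (hS N hN)
  have := infinite_of_nontrivial_of_infinite_residueField (A := A) (M := M ⧸ N)
  exact not_finite (M ⧸ N)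

/-- The ideal of the Rees algebra of `I` consisting of the elements whose degree `n` coefficient
lies in `I ^ (n + 1) + J`. -/
def reesAlgebraInitialIdeal {A : Type*} [CommRing A] (I J : Ideal A) : Ideal (reesAlgebra I) where
  carrier := {f | ∀ n, f.1.coeff n ∈ I ^ (n + 1) ⊔ J}
  add_mem' hf hg n := by
    simpa using add_mem (hf n) (hg n)
  zero_mem' n := by simp
  smul_mem' g f hf n := by
    simp only [smul_eq_mul, MulMemClass.coe_mul, Polynomial.coeff_mul]
    refine sum_mem fun p hp => ?_
    have hp' : p.1 + p.2 = n := by simpa using hp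
    have hg : g.1.coeff p.1 ∈ I ^ p.1 := g.2 p.1
    have := Ideal.mul_mem_mul hg (hf p.2)
    rw [Ideal.mul_sup, ← pow_add, ← add_assoc, hp'] at this
    exact (sup_le_sup le_rfl Ideal.mul_le_right :
      I ^ (n + 1) ⊔ I ^ p.1 * J ≤ I ^ (n + 1) ⊔ J) this

/-- The inclusion of `I ^ n` into the Rees algebra in degree `n`. -/
noncomputable def reesAlgebraMonomial {A : Type*} [CommRing A] (I : Ideal A) (n : ℕ) :
    ↥(I ^ n) →ₗ[A] reesAlgebra I where
  toFun x := ⟨Polynomial.monomial n x.1, reesAlgebra.monomial_mem.2 x.2⟩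
  map_add' x y := by ext1; simp
  map_smul' a x := by ext1; simp [Polynomial.smul_monomial]

lemma reesAlgebraMonomial_mem_initialIdeal_iff {A : Type*} [CommRing A] {I J : Ideal A} {n : ℕ}
    (x : ↥(I ^ n)) :
    reesAlgebraMonomial I n x ∈ reesAlgebraInitialIdeal I J ↔ x.1 ∈ I ^ (n + 1) ⊔ J := by
  refine ⟨fun h => by simpa [reesAlgebraMonomial] using h n, fun h k => ?_⟩
  by_cases hk : n = k
  · subst hk
    simpa [reesAlgebraMonomial] using h
  · simp [reesAlgebraMonomial, Polynomial.coeff_monomial, hk]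

/-- If an ideal `q` of the Rees algebra contains in its radical all elements of degree one, then it
contains all elements of large degree. -/
lemma exists_forall_reesAlgebraMonomial_mem {A : Type*} [CommRing A] [IsNoetherianRing A]
    {I : Ideal A} {q : Ideal (reesAlgebra I)}
    (hq : ∀ x, reesAlgebraMonomial I 1 x ∈ q.radical) :
    ∃ c, ∀ m ≥ c, ∀ y, reesAlgebraMonomial I m y ∈ q := by
  obtain ⟨c, hc⟩ := Ideal.exists_radical_pow_le_of_fg q (IsNoetherian.noetherian _)
  refine ⟨c, fun m hm y => hc (Ideal.pow_le_pow_right hm ?_)⟩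
  obtain ⟨y, hy⟩ := y
  have key : ∀ m, ∀ y (hy : y ∈ I ^ m), reesAlgebraMonomial I m ⟨y, hy⟩ ∈ q.radical ^ m := by
    intro m
    induction m with
    | zero => simp
    | succ m ih =>
      intro y hy
      suffices ∃ hz : y ∈ I ^ (m + 1),
          reesAlgebraMonomial I (m + 1) ⟨y, hz⟩ ∈ q.radical ^ (m + 1) from this.2
      refine Submodule.mul_induction_on (C := fun z => ∃ hz : z ∈ I ^ (m + 1),
        reesAlgebraMonomial I (m + 1) ⟨z, hz⟩ ∈ q.radical ^ (m + 1)) (pow_succ I m ▸ hy) ?_ ?_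
      · intro a ha b hb
        refine ⟨pow_succ I m ▸ Ideal.mul_mem_mul ha hb, ?_⟩
        have := Ideal.mul_mem_mul (ih a ha) (hq ⟨b, by simpa using hb⟩)
        rw [← pow_succ] at this
        convert this using 1
        ext1
        simp [reesAlgebraMonomial, Polynomial.monomial_mul_monomial]
      · rintro a b ⟨ha, ha'⟩ ⟨hb, hb'⟩
        exact ⟨add_mem ha hb, by
          have := add_mem ha' hb'
          rwa [← map_add] at this⟩
  exact key m y hy


/-- Existence of superficial elements avoiding finitely many ideals. -/
lemma exists_superficial {A : Type*} [CommRing A] [IsLocalRing A] [IsNoetherianRing A]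
    [Infinite (ResidueField A)] (I J : Ideal A) {S : Set (Ideal A)} (hS : S.Finite)
    (hIS : ∀ p ∈ S, ¬ I ≤ p) :
    ∃ x ∈ I, (∀ p ∈ S, x ∉ p) ∧
      ∃ c, ∀ m ≥ c, ∀ y ∈ I ^ m, x * y ∈ I ^ (m + 2) ⊔ J → y ∈ I ^ (m + 1) ⊔ J := by
  classical
  obtain ⟨Q, hQ, hprim⟩ := Submodule.isLasker _ _ (reesAlgebraInitialIdeal I J)
  let N : Ideal (reesAlgebra I) → Submodule A ↥(I ^ 1) := fun q =>
    (q.radical.restrictScalars A).comap (reesAlgebraMonomial I 1)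
  let T := ((Q.image N).filter (· ≠ ⊤)) ∪ hS.toFinset.image (Submodule.comap (I ^ 1).subtype)
  obtain ⟨⟨x, hx⟩, hxT⟩ := exists_forall_notMem_of_infinite_residueField T (by
    intro L hL
    simp only [T, Finset.mem_union, Finset.mem_filter, Finset.mem_image,
      Set.Finite.mem_toFinset] at hL
    obtain hL | ⟨p, hp, rfl⟩ := hL
    · exact hL.2
    · rw [Ne, Submodule.comap_subtype_eq_top, pow_one]
      exact hIS p hp)
  have hc : ∀ q : Ideal (reesAlgebra I), ∃ c, N q = ⊤ →
      ∀ m ≥ c, ∀ y, reesAlgebraMonomial I m y ∈ q := by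
    intro q
    by_cases hq : N q = ⊤
    · obtain ⟨c, hc⟩ := exists_forall_reesAlgebraMonomial_mem (q := q) fun x => by
        have : x ∈ N q := hq ▸ Submodule.mem_top
        simpa [N] using this
      exact ⟨c, fun _ => hc⟩
    · exact ⟨0, fun h => absurd h hq⟩
  choose c hc using hc
  refine ⟨x, by simpa using hx, fun p hp hxp => hxT (Submodule.comap (I ^ 1).subtype p) ?_ hxp,
    Q.sup c, fun m hm y hy hxy => ?_⟩
  · exact Finset.mem_union_right _ (Finset.mem_image_of_mem _ (hS.mem_toFinset.2 hp))
  rw [← reesAlgebraMonomial_mem_initialIdeal_iff ⟨y, hy⟩, ← hQ, Submodule.mem_finsetInf]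
  intro q hq
  by_cases hNq : N q = ⊤
  · exact hc q hNq m ((Finset.le_sup hq).trans hm) _
  have hxq : reesAlgebraMonomial I 1 ⟨x, hx⟩ ∉ Ideal.radical q := fun h =>
    hxT (N q) (Finset.mem_union_left _ (Finset.mem_filter.2 ⟨Finset.mem_image_of_mem _ hq, hNq⟩)) h
  have hmul : reesAlgebraMonomial I m ⟨y, hy⟩ * reesAlgebraMonomial I 1 ⟨x, hx⟩ ∈ q := by
    have hyx : y * x ∈ I ^ (m + 1) := by
      rw [pow_add]
      exact Ideal.mul_mem_mul hy hx
    have : reesAlgebraMonomial I m ⟨y, hy⟩ * reesAlgebraMonomial I 1 ⟨x, hx⟩ =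
        reesAlgebraMonomial I (m + 1) ⟨y * x, hyx⟩ := by
      ext1
      simp [reesAlgebraMonomial, Polynomial.monomial_mul_monomial]
    rw [this]
    have := (reesAlgebraMonomial_mem_initialIdeal_iff (J := J) ⟨y * x, hyx⟩).2
      (by simpa [mul_comm] using hxy)
    rw [← hQ, Submodule.mem_finsetInf] at this
    exact this q hq
  exact ((Ideal.isPrimary_iff.1 (hprim hq)).2 hmul).resolve_right hxq
/-- `x` is a nonzerodivisor modulo the ideal `J`. -/
def IsRegularMod {A : Type*} [CommRing A] (J : Ideal A) (x : A) : Prop :=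
  ∀ y, x * y ∈ J → y ∈ J

lemma isRegularMod_of_forall_associatedPrimes {A : Type*} [CommRing A] [IsNoetherianRing A]
    {J : Ideal A} {x : A} (hx : ∀ p ∈ associatedPrimes A (A ⧸ J), x ∉ p) : IsRegularMod J x := by
  intro y hxy
  by_contra hy
  have : x ∈ ⋃ p ∈ associatedPrimes A (A ⧸ J), (p : Set A) := by
    rw [biUnion_associatedPrimes_eq_zero_divisors]
    exact ⟨Ideal.Quotient.mk J y, by rwa [Ne, Ideal.Quotient.eq_zero_iff_mem],
      Ideal.Quotient.eq_zero_iff_mem.2 hxy⟩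
  obtain ⟨p, hp, hxp⟩ := Set.mem_iUnion₂.1 this
  exact hx p hp hxp

/-- The socle of `A ⧸ J` is trivial. -/
def HasTrivialSocleMod {A : Type*} [CommRing A] [IsLocalRing A] (J : Ideal A) : Prop :=
  ∀ s, (∀ a ∈ maximalIdeal A, a * s ∈ J) → s ∈ J

lemma IsRegularMod.hasTrivialSocleMod {A : Type*} [CommRing A] [IsLocalRing A] {J : Ideal A}
    {x : A} (hx : IsRegularMod J x) (hxm : x ∈ maximalIdeal A) : HasTrivialSocleMod J :=
  fun s hs => hx s (hs x hxm)

lemma HasTrivialSocleMod.maximalIdeal_notMem {A : Type*} [CommRing A] [IsLocalRing A]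
    [IsNoetherianRing A] {J : Ideal A} (hJ : HasTrivialSocleMod J) :
    maximalIdeal A ∉ associatedPrimes A (A ⧸ J) := by
  intro h
  obtain ⟨-, s, hs⟩ := isAssociatedPrime_iff.1 h
  obtain ⟨s, rfl⟩ := Ideal.Quotient.mk_surjective s
  have hmem : ∀ a, a ∈ maximalIdeal A ↔ a * s ∈ J := fun a => by
    rw [hs, Submodule.mem_colon_singleton, Submodule.mem_bot, ← Ideal.Quotient.eq_zero_iff_mem]
    rfl
  have := hJ s fun a ha => (hmem a).1 ha
  exact (Ideal.ne_top_iff_one _).1 (maximalIdeal.isMaximal A).ne_top ((hmem 1).2 (by simpa))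

lemma HasTrivialSocleMod.not_le_of_mem_associatedPrimes {A : Type*} [CommRing A] [IsLocalRing A]
    [IsNoetherianRing A] {J I p : Ideal A} (hJ : HasTrivialSocleMod J)
    (hI : maximalIdeal A ≤ I.radical) (hp : p ∈ associatedPrimes A (A ⧸ J)) : ¬ I ≤ p := by
  intro hIp
  have hprime : p.IsPrime := hp.isPrime
  have : maximalIdeal A ≤ p := hI.trans (hprime.radical_le_iff.2 hIp)
  have : p = maximalIdeal A :=
    ((maximalIdeal.isMaximal A).eq_of_le hprime.ne_top this).symm
  exact hJ.maximalIdeal_notMem (this ▸ hp)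

lemma exists_isRegularMod_of_hasTrivialSocleMod {A : Type*} [CommRing A] [IsLocalRing A]
    [IsNoetherianRing A] {J₁ J₂ J₃ : Ideal A} (h₁ : HasTrivialSocleMod J₁)
    (h₂ : HasTrivialSocleMod J₂) (h₃ : HasTrivialSocleMod J₃) :
    ∃ z ∈ maximalIdeal A, IsRegularMod J₁ z ∧ IsRegularMod J₂ z ∧ IsRegularMod J₃ z := by
  classical
  let S := associatedPrimes A (A ⧸ J₁) ∪ associatedPrimes A (A ⧸ J₂) ∪ associatedPrimes A (A ⧸ J₃)
  have hS : S.Finite := ((associatedPrimes.finite A _).union (associatedPrimes.finite A _)).union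
    (associatedPrimes.finite A _)
  have hSm : ∀ p ∈ S, ¬ maximalIdeal A ≤ p := by
    rintro p ((hp | hp) | hp)
    exacts [h₁.not_le_of_mem_associatedPrimes Ideal.le_radical hp,
      h₂.not_le_of_mem_associatedPrimes Ideal.le_radical hp,
      h₃.not_le_of_mem_associatedPrimes Ideal.le_radical hp]
  have hSprime : ∀ p ∈ S, p.IsPrime := by
    rintro p ((hp | hp) | hp) <;> exact hp.isPrime
  have : ¬ (maximalIdeal A : Set A) ⊆ ⋃ p ∈ (hS.toFinset : Set (Ideal A)), (p : Set A) := by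
    intro h
    obtain ⟨p, hp, hle⟩ := (Ideal.subset_union_prime (s := hS.toFinset) (f := id) ⊥ ⊥
      fun p hp _ _ => hSprime p (hS.mem_toFinset.1 hp)).1 h
    exact hSm p (hS.mem_toFinset.1 hp) hle
  obtain ⟨z, hz, hzS⟩ := Set.not_subset.1 this
  have hzS : ∀ p ∈ S, z ∉ p := by simpa using hzS
  exact ⟨z, hz,
    isRegularMod_of_forall_associatedPrimes fun p hp => hzS p (.inl (.inl hp)),
    isRegularMod_of_forall_associatedPrimes fun p hp => hzS p (.inl (.inr hp)),
    isRegularMod_of_forall_associatedPrimes fun p hp => hzS p (.inr hp)⟩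

lemma mem_sup_span_singleton_iff {A : Type*} [CommRing A] {J : Ideal A} {x y : A} :
    y ∈ J ⊔ Ideal.span {x} ↔ ∃ c, y - x * c ∈ J := by
  rw [Submodule.mem_sup]
  constructor
  · rintro ⟨j, hj, z, hz, rfl⟩
    obtain ⟨c, rfl⟩ := Ideal.mem_span_singleton'.1 hz
    exact ⟨c, by convert hj using 1; ring⟩
  · rintro ⟨c, hc⟩
    exact ⟨_, hc, x * c, Ideal.mem_span_singleton'.2 ⟨c, by ring⟩, by ring⟩

lemma IsRegularMod.hasTrivialSocleMod_swap {A : Type*} [CommRing A] [IsLocalRing A] {J : Ideal A}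
    {x y : A} (hx : IsRegularMod J x) (hy : IsRegularMod J y)
    (h : HasTrivialSocleMod (J ⊔ Ideal.span {y})) (hym : y ∈ maximalIdeal A) :
    HasTrivialSocleMod (J ⊔ Ideal.span {x}) := by
  intro s hs
  obtain ⟨t, ht⟩ := mem_sup_span_singleton_iff.1 (hs y hym)
  have ht' : t ∈ J ⊔ Ideal.span {y} := h t fun a ha => by
    obtain ⟨b, hb⟩ := mem_sup_span_singleton_iff.1 (hs a ha)
    refine mem_sup_span_singleton_iff.2 ⟨b, hx _ ?_⟩
    convert sub_mem (J.mul_mem_left y hb) (J.mul_mem_left a ht) using 1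
    ring
  obtain ⟨c, hc⟩ := mem_sup_span_singleton_iff.1 ht'
  refine mem_sup_span_singleton_iff.2 ⟨c, hy _ ?_⟩
  convert add_mem ht (J.mul_mem_left x hc) using 1
  ring

lemma IsRegularMod.swap {A : Type*} [CommRing A] {J : Ideal A} {y z : A}
    (hy : IsRegularMod J y) (hz : IsRegularMod (J ⊔ Ideal.span {y}) z) :
    IsRegularMod (J ⊔ Ideal.span {z}) y := by
  intro w hw
  obtain ⟨v, hv⟩ := mem_sup_span_singleton_iff.1 hw
  obtain ⟨c, hc⟩ := mem_sup_span_singleton_iff.1 (hz v (mem_sup_span_singleton_iff.2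
    ⟨w, by convert neg_mem hv using 1; ring⟩))
  refine mem_sup_span_singleton_iff.2 ⟨c, hy _ ?_⟩
  convert add_mem hv (J.mul_mem_left z hc) using 1
  ring

/-- The maximal ideal contains a regular sequence of length `d` modulo `J`. -/
def HasRegularSeqMod {A : Type*} [CommRing A] [IsLocalRing A] : ℕ → Ideal A → Prop
  | 0, _ => True
  | d + 1, J => ∃ x ∈ maximalIdeal A, IsRegularMod J x ∧ HasRegularSeqMod d (J ⊔ Ideal.span {x})

lemma HasRegularSeqMod.hasTrivialSocleMod {A : Type*} [CommRing A] [IsLocalRing A] {d : ℕ}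
    {J : Ideal A} (h : HasRegularSeqMod (d + 1) J) : HasTrivialSocleMod J :=
  let ⟨_, hxm, hx, _⟩ := h
  hx.hasTrivialSocleMod hxm

/-- Every regular element is the beginning of a regular sequence of maximal length. -/
lemma HasRegularSeqMod.sup_span_singleton {A : Type*} [CommRing A] [IsLocalRing A]
    [IsNoetherianRing A] {d : ℕ} : ∀ {J : Ideal A} {x : A}, HasRegularSeqMod (d + 1) J →
    x ∈ maximalIdeal A → IsRegularMod J x → HasRegularSeqMod d (J ⊔ Ideal.span {x}) := by
  induction d with
  | zero => intros; trivial
  | succ d ih =>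
    rintro J x ⟨y, hym, hy, hd⟩ hxm hx
    obtain ⟨z, hzm, hz, hzx, hzy⟩ := exists_isRegularMod_of_hasTrivialSocleMod
      (hy.hasTrivialSocleMod hym) (hx.hasTrivialSocleMod_swap hy hd.hasTrivialSocleMod hym)
      hd.hasTrivialSocleMod
    refine ⟨z, hzm, hzx, ?_⟩
    rw [sup_right_comm]
    refine ih ⟨y, hym, hy.swap hzy, ?_⟩ hxm (hx.swap hzx)
    rw [sup_right_comm]
    exact ih hd hzm hzy

lemma hasRegularSeqMod_of_isWeaklyRegular {A : Type*} [CommRing A] [IsLocalRing A] {rs : List A}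
    (hrs : RingTheory.Sequence.IsWeaklyRegular A rs) (hm : ∀ x ∈ rs, x ∈ maximalIdeal A) :
    HasRegularSeqMod rs.length (⊥ : Ideal A) := by
  have key : ∀ k i, i + k = rs.length → HasRegularSeqMod k (Ideal.ofList (rs.take i)) := by
    intro k
    induction k with
    | zero => intros; trivial
    | succ k ih =>
      intro i hi
      have hlt : i < rs.length := by omega
      refine ⟨rs[i], hm _ (List.getElem_mem hlt), fun y hy => ?_, ?_⟩
      · have := hrs.regular_mod_prev i hlt
        rw [isSMulRegular_iff_right_eq_zero_of_smul] at this
        have := this (Submodule.Quotient.mk y) (by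
          rw [← Submodule.Quotient.mk_smul, Submodule.Quotient.mk_eq_zero]
          simpa using hy)
        rw [Submodule.Quotient.mk_eq_zero] at this
        simpa using this
      · have := ih (i + 1) (by omega)
        rwa [List.take_succ_eq_append_getElem hlt, Ideal.ofList_append,
          Ideal.ofList_singleton] at this
  simpa using key rs.length 0 (by simp)
/-- Multiplication by `g` as a map `A ⧸ I → A ⧸ L`. -/
def Ideal.quotientMulMap {A : Type*} [CommRing A] (I L : Ideal A) (g : A)
    (h : ∀ a ∈ I, a * g ∈ L) : (A ⧸ I) →ₗ[A] (A ⧸ L) :=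
  Submodule.mapQ I L (LinearMap.toSpanSingleton A A g) fun a ha => by simpa using h a ha

lemma Ideal.range_quotientMulMap {A : Type*} [CommRing A] (I L : Ideal A) (g : A)
    (h : ∀ a ∈ I, a * g ∈ L) :
    (I.quotientMulMap L g h).range =
      (Submodule.factor (le_sup_left : L ≤ L ⊔ Ideal.span {g})).ker := by
  ext y
  obtain ⟨y, rfl⟩ := Submodule.Quotient.mk_surjective _ y
  rw [LinearMap.mem_ker, ← Submodule.mkQ_apply, Submodule.factor_mk, Submodule.mkQ_apply,
    Submodule.mkQ_apply, Submodule.Quotient.mk_eq_zero, mem_sup_span_singleton_iff]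
  constructor
  · rintro ⟨c, hc⟩
    obtain ⟨c, rfl⟩ := Submodule.Quotient.mk_surjective _ c
    simp only [Ideal.quotientMulMap, Submodule.mapQ_apply, LinearMap.toSpanSingleton_apply,
      smul_eq_mul] at hc
    refine ⟨c, ?_⟩
    rw [mul_comm g c]
    exact (Submodule.Quotient.eq _).1 hc.symm
  · rintro ⟨c, hc⟩
    refine ⟨Submodule.Quotient.mk c, ?_⟩
    simp only [Ideal.quotientMulMap, Submodule.mapQ_apply, LinearMap.toSpanSingleton_apply,
      smul_eq_mul]
    rw [mul_comm g c] at hc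
    exact ((Submodule.Quotient.eq _).2 hc).symm

lemma Ideal.length_quotient_le_add {A : Type*} [CommRing A] (I L : Ideal A) (g : A)
    (h : ∀ a ∈ I, a * g ∈ L) :
    Module.length A (A ⧸ L) ≤
      Module.length A (A ⧸ (L ⊔ Ideal.span {g})) + Module.length A (A ⧸ I) := by
  let f := I.quotientMulMap L g h
  rw [Module.length_eq_add_of_exact f.range.subtype
    (Submodule.factor (le_sup_left : L ≤ L ⊔ Ideal.span {g})) (Submodule.subtype_injective _)
    (Submodule.factor_surjective _)
    (by rw [LinearMap.exact_iff, Submodule.range_subtype]; exact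
      (I.range_quotientMulMap L g h).symm), add_comm]
  gcongr
  exact Module.length_le_of_surjective f.rangeRestrict f.surjective_rangeRestrict

lemma Ideal.length_quotient_eq_add {A : Type*} [CommRing A] (I L : Ideal A) (g : A)
    (h : ∀ a, a ∈ I ↔ a * g ∈ L) :
    Module.length A (A ⧸ L) =
      Module.length A (A ⧸ I) + Module.length A (A ⧸ (L ⊔ Ideal.span {g})) := by
  refine Module.length_eq_add_of_exact (I.quotientMulMap L g fun a ha => (h a).1 ha)
    (Submodule.factor (le_sup_left : L ≤ L ⊔ Ideal.span {g})) ?_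
    (Submodule.factor_surjective _)
    (LinearMap.exact_iff.2 (I.range_quotientMulMap L g _).symm)
  refine (injective_iff_map_eq_zero _).2 fun a ha => ?_
  obtain ⟨a, rfl⟩ := Submodule.Quotient.mk_surjective _ a
  simp only [Ideal.quotientMulMap, Submodule.mapQ_apply, LinearMap.toSpanSingleton_apply,
      smul_eq_mul, Submodule.Quotient.mk_eq_zero] at ha ⊢
  exact (h a).2 ha

lemma Ideal.length_quotient_anti {A : Type*} [CommRing A] {I J : Ideal A} (h : I ≤ J) :
    Module.length A (A ⧸ J) ≤ Module.length A (A ⧸ I) :=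
  Module.length_le_of_surjective (Submodule.factor h) (Submodule.factor_surjective h)

lemma Ideal.eq_of_le_of_length_quotient_eq {A : Type*} [CommRing A] {I J : Ideal A} (h : I ≤ J)
    (hlen : Module.length A (A ⧸ I) = Module.length A (A ⧸ J))
    (hfin : Module.length A (A ⧸ I) ≠ ⊤) : I = J := by
  have hadd := Module.length_eq_add_of_exact (Submodule.factor h).ker.subtype
    (Submodule.factor h) (Submodule.subtype_injective _) (Submodule.factor_surjective h)
    (by rw [LinearMap.exact_iff, Submodule.range_subtype])
  rw [← hlen] at hadd
  have hzero : Module.length A (Submodule.factor h).ker = 0 := by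
    generalize Module.length A (Submodule.factor h).ker = b at hadd
    generalize Module.length A (A ⧸ I) = a at hadd hfin
    exact (ENat.add_left_injective_of_ne_top hfin (by simpa using hadd)).symm
  rw [Module.length_eq_zero_iff, Submodule.subsingleton_iff_eq_bot, LinearMap.ker_eq_bot] at hzero
  refine le_antisymm h fun x hx => ?_
  rw [← Submodule.Quotient.mk_eq_zero]
  apply hzero
  rw [map_zero, ← Submodule.mkQ_apply, Submodule.factor_mk, Submodule.mkQ_apply,
    Submodule.Quotient.mk_eq_zero]
  exact hx

lemma Ideal.length_quotient_le_add_card_mul {A : Type*} [CommRing A] (I : Ideal A)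
    (S : Finset A) : ∀ L : Ideal A, (∀ s ∈ S, ∀ a ∈ I, a * s ∈ L) →
    Module.length A (A ⧸ L) ≤ Module.length A (A ⧸ (L ⊔ Ideal.span (S : Set A))) +
      S.card * Module.length A (A ⧸ I) := by
  classical
  induction S using Finset.induction_on with
  | empty =>
    intro L _
    simpa using Ideal.length_quotient_anti (by simp)
  | insert x S hx ih =>
    intro L hL
    refine (Ideal.length_quotient_le_add I L x fun a ha =>
      hL x (Finset.mem_insert_self _ _) a ha).trans ?_
    have := ih (L ⊔ Ideal.span {x}) fun s hs a ha =>
      Ideal.mem_sup_left (hL s (Finset.mem_insert_of_mem hs) a ha)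
    rw [Finset.coe_insert, Ideal.span_insert, Finset.card_insert_of_notMem hx, ← sup_assoc]
    push_cast
    rw [add_mul, one_mul, ← add_assoc]
    gcongr

lemma Ideal.sup_pow_succ {A : Type*} [CommRing A] (X Q : Ideal A) (n : ℕ) :
    (X ⊔ Q) ^ (n + 1) = Q ^ (n + 1) ⊔ X * (X ⊔ Q) ^ n := by
  refine le_antisymm ?_ (sup_le (Ideal.pow_right_mono le_sup_right _) ?_)
  · induction n with
    | zero => simp [sup_comm]
    | succ n ih =>
      rw [pow_succ' _ (n + 1), Ideal.sup_mul]
      refine sup_le le_sup_right ((Ideal.mul_mono_right ih).trans ?_)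
      rw [Ideal.mul_sup, ← pow_succ', mul_left_comm]
      refine sup_le_sup le_rfl (Ideal.mul_mono_right ?_)
      rw [pow_succ' _ n]
      exact Ideal.mul_mono_left le_sup_right
  · rw [pow_succ']
    exact Ideal.mul_mono_left le_sup_left

lemma Ideal.exists_finset_span_eq_pow {A : Type*} [CommRing A] (S : Finset A) : ∀ n : ℕ,
    ∃ T : Finset A, T.card ≤ Nat.multichoose S.card n ∧
      Ideal.span (T : Set A) = Ideal.span (S : Set A) ^ n := by
  classical
  induction S using Finset.induction_on with
  | empty =>
    rintro (_ | n)
    · exact ⟨{1}, by simp⟩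
    · exact ⟨∅, by simp, by
        rw [Finset.coe_empty, Ideal.span_empty, ← Ideal.zero_eq_bot, zero_pow n.succ_ne_zero]⟩
  | insert x S hx ih =>
    intro n
    rw [Finset.card_insert_of_notMem hx]
    induction n with
    | zero => exact ⟨{1}, by simp⟩
    | succ n ihn =>
      obtain ⟨T₁, hc₁, hT₁⟩ := ih (n + 1)
      obtain ⟨T₂, hc₂, hT₂⟩ := ihn
      refine ⟨T₁ ∪ T₂.image (x * ·), ?_, ?_⟩
      · rw [Nat.multichoose_succ_succ]
        exact (Finset.card_union_le _ _).trans (add_le_add hc₁ (Finset.card_image_le.trans hc₂))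
      · rw [Finset.coe_insert, Ideal.span_insert] at hT₂ ⊢
        rw [Ideal.sup_pow_succ, ← hT₁, ← hT₂, Finset.coe_union, Ideal.span_union,
          Finset.coe_image, Ideal.span_mul_span', Set.singleton_mul]

lemma Ideal.length_quotient_pow_le {A : Type*} [CommRing A] (S : Finset A) (n : ℕ) :
    Module.length A (A ⧸ Ideal.span (S : Set A) ^ (n + 1)) ≤
      Nat.multichoose (S.card + 1) n * Module.length A (A ⧸ Ideal.span (S : Set A)) := by
  induction n with
  | zero => simpa using Ideal.length_quotient_anti (by simp)
  | succ n ih =>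
    obtain ⟨T, hc, hT⟩ := Ideal.exists_finset_span_eq_pow S (n + 1)
    refine (Ideal.length_quotient_le_add_card_mul (Ideal.span (S : Set A)) T _
      fun s hs a ha => ?_).trans ?_
    · rw [pow_succ']
      exact Ideal.mul_mem_mul ha (hT ▸ Ideal.subset_span hs)
    · rw [hT, sup_eq_right.2 (Ideal.pow_le_pow_right (Nat.le_succ _)), Nat.multichoose_succ_succ,
        add_comm]
      push_cast
      rw [add_mul]
      gcongr

lemma Ideal.length_quotient_pow_le_of_span_le {A : Type*} [CommRing A] {I : Ideal A} (S : Finset A)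
    (hS : Ideal.span (S : Set A) ≤ I) (n : ℕ) :
    Module.length A (A ⧸ I ^ (n + 2)) ≤
      Nat.multichoose (S.card + 1) n * Module.length A (A ⧸ Ideal.span (S : Set A)) +
        Nat.multichoose S.card (n + 1) * Module.length A (A ⧸ I) := by
  obtain ⟨T, hc, hT⟩ := Ideal.exists_finset_span_eq_pow S (n + 1)
  refine (Ideal.length_quotient_anti (I := I * Ideal.span (S : Set A) ^ (n + 1)) ?_).trans
    ((Ideal.length_quotient_le_add_card_mul I T _ fun s hs a ha =>
      Ideal.mul_mem_mul ha (hT ▸ Ideal.subset_span hs)).trans ?_)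
  · rw [pow_succ' I (n + 1)]
    exact Ideal.mul_mono_right (Ideal.pow_right_mono hS _)
  · rw [hT, sup_eq_right.2 Ideal.mul_le_right]
    exact add_le_add (Ideal.length_quotient_pow_le S n) (by gcongr)

lemma IsRegularMod.exists_forall_mem_pow_sup {A : Type*} [CommRing A] [IsNoetherianRing A]
    {I J : Ideal A} {x : A} (hx : IsRegularMod J x) {c : ℕ}
    (hc : ∀ m ≥ c, ∀ y ∈ I ^ m, x * y ∈ I ^ (m + 2) ⊔ J → y ∈ I ^ (m + 1) ⊔ J) :
    ∃ N, ∀ n ≥ N, ∀ y, x * y ∈ I ^ (n + 1) ⊔ J → y ∈ I ^ n ⊔ J := by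
  obtain ⟨k, hk⟩ := Ideal.exists_pow_inf_eq_pow_smul I (J ⊔ Ideal.span {x})
  refine ⟨k + c, fun n hn y hy => ?_⟩
  have hbase : y ∈ I ^ c ⊔ J := by
    obtain ⟨u, hu, j, hj, huj⟩ := Submodule.mem_sup.1 hy
    have hux : u ∈ J ⊔ Ideal.span {x} := mem_sup_span_singleton_iff.2 ⟨y, by
      rw [← huj]
      simpa using hj⟩
    have huI : u ∈ I ^ (n + 1) • (⊤ : Ideal A) := by
      rwa [smul_eq_mul, Ideal.mul_top]
    have hu' : u ∈ I ^ (n + 1) • (⊤ : Ideal A) ⊓ (J ⊔ Ideal.span {x}) := ⟨huI, hux⟩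
    rw [hk (n + 1) (by omega)] at hu'
    have hu'' : u ∈ I ^ c * (J ⊔ Ideal.span {x}) :=
      Ideal.mul_mono (Ideal.pow_le_pow_right (by omega)) inf_le_right hu'
    rw [Ideal.mul_sup] at hu''
    obtain ⟨j', hj', w, hw, hjw⟩ := Submodule.mem_sup.1 hu''
    obtain ⟨v, hv, rfl⟩ := Ideal.mem_mul_span_singleton.1 hw
    have : y - v ∈ J := hx _ (by
      convert add_mem hj (Ideal.mul_le_right hj' : j' ∈ J) using 1
      rw [mul_sub, ← huj, ← hjw]
      ring)
    exact Submodule.mem_sup.2 ⟨v, hv, _, this, by ring⟩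
  have key : ∀ m, c ≤ m → m ≤ n → y ∈ I ^ m ⊔ J := by
    intro m hm
    induction m, hm using Nat.le_induction with
    | base => exact fun _ => hbase
    | succ m hm ih =>
      intro hmn
      obtain ⟨z, hz, j, hj, rfl⟩ := Submodule.mem_sup.1 (ih (by omega))
      refine add_mem (hc m hm z hz ?_) (Ideal.mem_sup_right hj)
      have := sub_mem ((sup_le_sup_right (Ideal.pow_le_pow_right (by omega)) J :
        I ^ (n + 1) ⊔ J ≤ I ^ (m + 2) ⊔ J) hy) (Ideal.mem_sup_right (J.mul_mem_left x hj))
      rwa [mul_add, add_sub_cancel_right] at this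
  exact key n (by omega) le_rfl

/-- Modulo a superficial element which is regular modulo `J`, the Hilbert function drops to its
first difference. -/
lemma exists_superficial_length {A : Type*} [CommRing A] [IsLocalRing A] [IsNoetherianRing A]
    [Infinite (ResidueField A)] {I J : Ideal A} (hI : maximalIdeal A ≤ I.radical)
    (hJ : HasTrivialSocleMod J) :
    ∃ x ∈ I, IsRegularMod J x ∧ ∃ N, ∀ n ≥ N,
      Module.length A (A ⧸ (I ^ (n + 1) ⊔ J)) = Module.length A (A ⧸ (I ^ n ⊔ J)) +
        Module.length A (A ⧸ (I ^ (n + 1) ⊔ (J ⊔ Ideal.span {x}))) := by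
  obtain ⟨x, hxI, hx, c, hc⟩ := exists_superficial I J (associatedPrimes.finite A (A ⧸ J))
    fun p hp => hJ.not_le_of_mem_associatedPrimes hI hp
  have hreg := isRegularMod_of_forall_associatedPrimes hx
  obtain ⟨N, hN⟩ := hreg.exists_forall_mem_pow_sup hc
  refine ⟨x, hxI, hreg, N, fun n hn => ?_⟩
  rw [← sup_assoc]
  refine Ideal.length_quotient_eq_add _ _ x fun a =>
    ⟨fun ha => ?_, fun ha => hN n hn a (by rwa [mul_comm])⟩
  have := Ideal.mul_mem_mul ha hxI
  rw [Ideal.sup_mul, ← pow_succ] at this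
  exact (sup_le_sup le_rfl Ideal.mul_le_left : I ^ (n + 1) ⊔ J * I ≤ I ^ (n + 1) ⊔ J) this

/-- The value at `n` of the Hilbert–Samuel polynomial of degree `d` with coefficients `e`. -/
def hilbertSamuelEval (e : ℕ → ℤ) (d n : ℕ) : ℤ :=
  ∑ i ∈ Finset.range (d + 1), (-1) ^ i * e i * ((n + d - i).choose (d - i) : ℤ)

lemma hilbertSamuelEval_succ (e : ℕ → ℤ) (d n : ℕ) :
    hilbertSamuelEval e (d + 1) (n + 1) =
      hilbertSamuelEval e (d + 1) n + hilbertSamuelEval e d (n + 1) := by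
  unfold hilbertSamuelEval
  rw [Finset.sum_range_succ, Finset.sum_range_succ _ (d + 1),
    add_right_comm _ _ (∑ i ∈ Finset.range (d + 1),
      (-1) ^ i * e i * ((n + 1 + d - i).choose (d - i) : ℤ)), ← Finset.sum_add_distrib]
  congr 1
  · refine Finset.sum_congr rfl fun i hi => ?_
    obtain ⟨k, rfl⟩ := Nat.exists_eq_add_of_le (Nat.lt_succ_iff.1 (Finset.mem_range.1 hi))
    rw [show n + 1 + (i + k + 1) - i = n + 1 + k + 1 by omega, show i + k + 1 - i = k + 1 by omega,
      show n + (i + k + 1) - i = n + 1 + k by omega, show n + 1 + (i + k) - i = n + 1 + k by omega,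
      show i + k - i = k by omega, Nat.choose_succ_succ]
    push_cast
    ring
  · simp

/-- In depth at least `d`, an ideal primary to the maximal ideal whose Hilbert function has degree
`d` contains `d` elements whose colength is the multiplicity. -/
lemma exists_span_length_eq {A : Type*} [CommRing A] [IsLocalRing A] [IsNoetherianRing A]
    [Infinite (ResidueField A)] {I : Ideal A} (hIm : I ≤ maximalIdeal A)
    (hI : maximalIdeal A ≤ I.radical) (e : ℕ → ℤ) (d : ℕ) :
    ∀ (J : Ideal A), HasRegularSeqMod d J → ∀ H : ℕ → ℕ,
      (∀ n, Module.length A (A ⧸ (I ^ (n + 1) ⊔ J)) = H n) →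
      ∀ N, (∀ n ≥ N, (H n : ℤ) = hilbertSamuelEval e d n) →
      ∃ S : Finset A, S.card ≤ d ∧ (S : Set A) ⊆ I ∧ ∃ q : ℕ,
        Module.length A (A ⧸ (J ⊔ Ideal.span (S : Set A))) = q ∧ (q : ℤ) = e 0 := by
  classical
  induction d with
  | zero =>
    intro J _ H hH N hN
    have hval : ∀ n ≥ N, (H n : ℤ) = e 0 := fun n hn => by
      rw [hN n hn]
      simp [hilbertSamuelEval]
    have hnak : I ^ (N + 1) ≤ J := by
      have heq : I ^ (N + 2) ⊔ J = I ^ (N + 1) ⊔ J :=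
        Ideal.eq_of_le_of_length_quotient_eq
          (sup_le_sup_right (Ideal.pow_le_pow_right (Nat.le_succ _)) J)
          (by
            rw [hH, hH]
            have := (hval (N + 1) (Nat.le_succ N)).trans (hval N le_rfl).symm
            exact_mod_cast this)
          (by rw [hH]; exact ENat.natCast_ne_top _)
      refine Submodule.le_of_le_smul_of_le_jacobson_bot (I := I) (IsNoetherian.noetherian _)
        (hIm.trans (IsLocalRing.maximalIdeal_le_jacobson ⊥)) ?_
      rw [smul_eq_mul, ← pow_succ', sup_comm, heq]
      exact le_sup_left
    refine ⟨∅, by simp, by simp, H N, ?_, hval N le_rfl⟩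
    have := hH N
    rw [sup_eq_right.2 hnak] at this
    rwa [Finset.coe_empty, Ideal.span_empty, sup_bot_eq]
  | succ d ih =>
    intro J hJ H hH N hN
    obtain ⟨x, hxI, hx, M, hM⟩ := exists_superficial_length hI hJ.hasTrivialSocleMod
    have hfin : ∀ n, ∃ h : ℕ,
        Module.length A (A ⧸ (I ^ (n + 1) ⊔ (J ⊔ Ideal.span {x}))) = h := fun n => by
      refine ⟨_, (ENat.natCast_toNat (ne_top_of_le_ne_top (ENat.natCast_ne_top (H n)) ?_)).symm⟩
      rw [← hH]
      exact Ideal.length_quotient_anti (sup_le_sup le_rfl le_sup_left)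
    choose H' hH' using hfin
    obtain ⟨S, hSc, hSI, q, hq, hqe⟩ := ih (J ⊔ Ideal.span {x})
      (hJ.sup_span_singleton (hIm hxI) hx) H' hH' (max N M + 1) (by
        rintro (_ | n) hn
        · omega
        have := hM (n + 1) (by omega)
        rw [hH, hH, hH'] at this
        have : (H (n + 1) : ℤ) = H n + H' (n + 1) := by exact_mod_cast this
        rw [hN n (by omega), hN (n + 1) (by omega), hilbertSamuelEval_succ] at this
        linarith)
    refine ⟨insert x S, (Finset.card_insert_le _ _).trans (by omega), ?_, q, ?_, hqe⟩
    · rw [Finset.coe_insert]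
      exact Set.insert_subset hxI hSI
    · rwa [Finset.coe_insert, Ideal.span_insert, ← sup_assoc]

lemma Nat.multichoose_mono_left (k : ℕ) : Monotone fun n => Nat.multichoose n k := by
  refine monotone_nat_of_le_succ fun n => ?_
  cases k with
  | zero => simp
  | succ k => simp [Nat.multichoose_succ_succ]

/-- An eventual upper bound on a Hilbert–Samuel polynomial bounds its second coefficient, since the
terms of index at least two have smaller order of growth. -/
lemma le_of_hilbertSamuelEval_le (e : ℕ → ℤ) (h : ℤ) (d N : ℕ)
    (H : ∀ n ≥ N, hilbertSamuelEval e (d + 1) (n + 1) ≤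
      (n + d + 1).choose (d + 1) * e 0 + (n + d + 1).choose d * h) : e 0 - h ≤ e 1 := by
  by_contra! hlt
  cases d with
  | zero =>
    have := H N le_rfl
    simp [hilbertSamuelEval, Finset.sum_range_succ] at this
    linarith
  | succ d =>
    let E : ℤ := ∑ j ∈ Finset.range (d + 1), |e (j + 2)|
    have hbound : ∀ n ≥ N, ((n + d + 2).choose (d + 1) : ℤ) ≤ E * (n + d + 1).choose d := by
      intro n hn
      have hn := H n hn
      simp only [hilbertSamuelEval] at hn
      rw [Finset.sum_range_succ', Finset.sum_range_succ'] at hn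
      have hrest : -(E * (n + d + 1).choose d) ≤ ∑ k ∈ Finset.range (d + 1),
          (-1) ^ (k + 1 + 1) * e (k + 1 + 1) *
            ((n + 1 + (d + 1 + 1) - (k + 1 + 1)).choose (d + 1 + 1 - (k + 1 + 1)) : ℤ) := by
        rw [Finset.sum_mul, ← Finset.sum_neg_distrib]
        refine Finset.sum_le_sum fun k hk => ?_
        obtain ⟨t, rfl⟩ := Nat.exists_eq_add_of_le (Nat.lt_succ_iff.1 (Finset.mem_range.1 hk))
        have hchoose : (n + 1 + t).choose t ≤ (n + (k + t) + 1).choose (k + t) := by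
          rw [show n + (k + t) + 1 = n + 1 + (k + t) by ring, Nat.choose_symm_add.symm,
            Nat.choose_symm_add.symm]
          exact Nat.choose_le_choose _ (by omega)
        rw [show n + 1 + (k + t + 1 + 1) - (k + 1 + 1) = n + 1 + t by omega,
          show k + t + 1 + 1 - (k + 1 + 1) = t by omega]
        refine (abs_le.1 ?_).1
        rw [abs_mul, abs_mul, abs_pow, abs_neg, abs_one, one_pow, one_mul, Nat.abs_cast]
        gcongr
      generalize (∑ k ∈ Finset.range (d + 1),
          (-1) ^ (k + 1 + 1) * e (k + 1 + 1) *
            ((n + 1 + (d + 1 + 1) - (k + 1 + 1)).choose (d + 1 + 1 - (k + 1 + 1)) : ℤ)) = R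
        at hn hrest
      have hpascal : (n + 1 + (d + 1 + 1)).choose (d + 1 + 1) =
          (n + (d + 1) + 1).choose (d + 1) + (n + (d + 1) + 1).choose (d + 1 + 1) := by
        rw [show n + 1 + (d + 1 + 1) = n + (d + 1) + 1 + 1 by ring, Nat.choose_succ_succ]
      simp only [zero_add, pow_one, pow_zero, Nat.sub_zero, hpascal,
        show n + 1 + (d + 1 + 1) - 1 = n + (d + 1) + 1 by omega,
        show d + 1 + 1 - 1 = d + 1 by omega] at hn
      push_cast at hn
      rw [show n + d + 2 = n + (d + 1) + 1 by ring]
      have hC : (0 : ℤ) ≤ (n + (d + 1) + 1).choose (d + 1) := by positivity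
      nlinarith [mul_le_mul_of_nonneg_right (show (1 : ℤ) ≤ e 0 - h - e 1 by linarith) hC]
    have hE : 0 ≤ E := Finset.sum_nonneg fun _ _ => abs_nonneg _
    obtain ⟨M, hM⟩ := Int.eq_ofNat_of_zero_le hE
    have hn := hbound (N + M * (d + 1)) (by omega)
    set n := N + M * (d + 1)
    have hid := Nat.add_one_mul_choose_eq (n + d + 1) d
    have hpos : 0 < (n + d + 1).choose d := Nat.choose_pos (by omega)
    rw [hM] at hn
    have hn : (n + d + 2).choose (d + 1) ≤ M * (n + d + 1).choose d := by exact_mod_cast hn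
    have := Nat.mul_le_mul_right (d + 1) hn
    rw [← hid, mul_right_comm] at this
    have := Nat.le_of_mul_le_mul_right this hpos
    omega

/-- Northcott's inequality: `e₁ ≥ e₀ - ℓ_A(A/I)`.  Here `H n = ℓ_A(A/I^{n+1})` and
the Hilbert coefficients `e i` are specified by the Hilbert–Samuel polynomial;
note `H 0 = ℓ_A(A/I)`. -/
theorem northcott (A : Type*) [CommRing A] [IsLocalRing A] [IsNoetherianRing A]
    [Infinite (ResidueField A)]
    (d : ℕ) (hd : 0 < d) (hCM : IsCohenMacaulayLocal A d)
    (I : Ideal A) (hI : IsPrimaryToMax A I)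
    (H : ℕ → ℕ)
    (hH : ∀ n : ℕ, moduleLength A (A ⧸ I ^ (n + 1)) = (H n : ℕ∞))
    (e : ℕ → ℤ) (N : ℕ)
    (hHS : ∀ n ≥ N, (H n : ℤ) =
      ∑ i ∈ Finset.range (d + 1),
        (-1) ^ i * e i * ((n + d - i).choose (d - i) : ℤ)) :
    e 1 ≥ e 0 - (H 0 : ℤ) := by
  obtain ⟨-, rs, hlen, hrs, hreg⟩ := hCM
  have hdepth := hasRegularSeqMod_of_isWeaklyRegular hreg.toIsWeaklyRegular hrs
  rw [hlen] at hdepth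
  have hH' : ∀ n, Module.length A (A ⧸ I ^ (n + 1)) = H n := fun n => by
    have := hH n
    rw [moduleLength, ← Module.coe_length] at this
    exact_mod_cast this
  obtain ⟨S, hSc, hSI, q, hq, hqe⟩ := exists_span_length_eq hI.1 hI.2 e d ⊥ hdepth H
    (fun n => by rw [sup_bot_eq, hH']) N hHS
  rw [bot_sup_eq] at hq
  obtain ⟨d, rfl⟩ := Nat.exists_eq_add_of_le' hd
  refine le_of_hilbertSamuelEval_le e (H 0) d N fun n hn => ?_
  have hle := Ideal.length_quotient_pow_le_of_span_le S (Ideal.span_le.2 hSI) n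
  have hzero := hH' 0
  rw [zero_add, pow_one] at hzero
  rw [hH' (n + 1), hq, hzero] at hle
  have hle : H (n + 1) ≤ (S.card + 1).multichoose n * q + S.card.multichoose (n + 1) * H 0 := by
    exact_mod_cast hle
  have h₁ : (S.card + 1).multichoose n ≤ (n + d + 1).choose (d + 1) := by
    refine (Nat.multichoose_mono_left n (Nat.succ_le_succ hSc)).trans_eq ?_
    simp only [Nat.multichoose_eq]
    rw [show d + 1 + 1 + n - 1 = n + (d + 1) by omega,
      Nat.choose_symm_add, add_assoc]
  have h₂ : S.card.multichoose (n + 1) ≤ (n + d + 1).choose d := by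
    refine (Nat.multichoose_mono_left (n + 1) hSc).trans_eq ?_
    simp only [Nat.multichoose_eq]
    rw [show d + 1 + (n + 1) - 1 = n + 1 + d by omega, Nat.choose_symm_add, add_right_comm]
  have hfinal : (H (n + 1) : ℤ) = hilbertSamuelEval e (d + 1) (n + 1) := hHS _ (by omega)
  rw [← hfinal, ← hqe]
  exact_mod_cast hle.trans (add_le_add (Nat.mul_le_mul_right q h₁) (Nat.mul_le_mul_right _ h₂))
end

section
/- Let $(A, \mathfrak{m})$ be a Cohen-Macaulay local ring of dimension $d > 0$ with infinite residue field, $I$ an $\mathfrak{m}$-primary ideal, and $Q$ a minimal reduction of $I$. Then $e_1(I) = e_0(I) - \ell_A(A/I)$ if and only if $I^2 = QI$; and in that case $e_i(I) = 0$ for all $2 \leq i \leq d$. -/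
open IsLocalRing

section Depth

open RingTheory.Sequence

open scoped Pointwise

universe u

lemma IsAssociatedPrime.notMem_of_isSMulRegular {A M : Type*} [CommRing A]
    [IsNoetherianRing A] [AddCommGroup M] [Module A M]
    {p : Ideal A} (hp : IsAssociatedPrime p M) {x : A} (hreg : IsSMulRegular M x) : x ∉ p := by
  intro hx
  have : x ∈ ⋃ p ∈ associatedPrimes A M, (p : Set A) := Set.mem_iUnion₂_of_mem hp hx
  rw [biUnion_associatedPrimes_eq_compl_regular] at this
  exact this hreg

variable {A : Type u} [CommRing A] [IsLocalRing A] [IsNoetherianRing A]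

lemma exists_associatedPrime_quotSMulTop {M : Type u} [AddCommGroup M] [Module A M]
    [Module.Finite A M] {x : A} (hx : x ∈ maximalIdeal A) (hreg : IsSMulRegular M x)
    {p : Ideal A} (hp : IsAssociatedPrime p M) :
    ∃ q : Ideal A, IsAssociatedPrime q (QuotSMulTop x M) ∧ p ≤ q ∧ x ∈ q := by
  obtain ⟨hpp, m, hm⟩ := isAssociatedPrime_iff.mp hp
  let N : Submodule A M := Submodule.torsionBySet A M (p : Set A)
  have hmN : m ∈ N := by
    rw [Submodule.mem_torsionBySet_iff]
    rintro ⟨r, hr⟩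
    rw [SetLike.mem_coe, hm, Submodule.mem_colon_singleton] at hr
    simpa using hr
  have hm0 : m ≠ 0 := by
    rintro rfl
    exact hpp.ne_top (by rw [hm]; ext; simp)
  have hN : ¬ N ≤ x • (⊤ : Submodule A M) := by
    intro hle
    have : N ≤ Ideal.span {x} • N := by
      intro n hn
      obtain ⟨n', -, rfl⟩ := Submodule.mem_smul_pointwise_iff_exists _ _ _ |>.mp (hle hn)
      refine Submodule.smul_mem_smul (Ideal.mem_span_singleton_self x) ?_
      rw [Submodule.mem_torsionBySet_iff] at hn ⊢
      intro r
      apply hreg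
      have := hn r
      simp only [smul_zero]
      rw [smul_comm] at this
      exact this
    have hbot := Submodule.eq_bot_of_le_smul_of_le_jacobson_bot _ N
      (IsNoetherian.noetherian N) this (by
        rw [IsLocalRing.jacobson_eq_maximalIdeal _ bot_ne_top, Ideal.span_singleton_le_iff_mem]
        exact hx)
    exact hm0 (by simpa [hbot] using hmN)
  obtain ⟨n, hn, hnx⟩ := SetLike.not_le_iff_exists.mp hN
  let n' : QuotSMulTop x M := Submodule.Quotient.mk n
  obtain ⟨q, hq, hle⟩ := exists_le_isAssociatedPrime_of_isNoetherianRing A n'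
    (by simpa [n', Submodule.Quotient.mk_eq_zero] using hnx)
  refine ⟨q, hq, fun r hr => hle ?_, hle ?_⟩
  · rw [Submodule.mem_torsionBySet_iff] at hn
    rw [Submodule.mem_colon_singleton]
    have := hn ⟨r, hr⟩
    simp only [Submodule.mem_bot, n', ← Submodule.Quotient.mk_smul]
    simp_all
  · rw [Submodule.mem_colon_singleton]
    simp only [Submodule.mem_bot, n', ← Submodule.Quotient.mk_smul]
    rw [Submodule.Quotient.mk_eq_zero]
    exact Submodule.smul_mem_pointwise_smul _ _ _ trivial

lemma length_le_ringKrullDim_quotient_of_isAssociatedPrime (rs : List A)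
    (hrs : ∀ r ∈ rs, r ∈ maximalIdeal A) {M : Type u} [AddCommGroup M] [Module A M]
    [Module.Finite A M] (hreg : IsRegular M rs) {p : Ideal A} (hp : IsAssociatedPrime p M) :
    (rs.length : WithBot ℕ∞) ≤ ringKrullDim (A ⧸ p) := by
  induction rs generalizing M p with
  | nil =>
    have := hp.isPrime
    simpa using ringKrullDim_nonneg_of_nontrivial
  | cons x rs ih =>
    have := hp.isPrime
    rw [isRegular_cons_iff] at hreg
    obtain ⟨q, hq, hpq, hxq⟩ :=
      exists_associatedPrime_quotSMulTop (hrs x (by simp)) hreg.1 hp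
    have h1 := ih (fun r hr => hrs r (by simp [hr])) hreg.2 hq
    have hxp := hp.notMem_of_isSMulRegular hreg.1
    have h2 := ringKrullDim_succ_le_of_surjective (Ideal.Quotient.factor hpq)
      (Ideal.Quotient.factor_surjective hpq) (r := Ideal.Quotient.mk p x)
      (mem_nonZeroDivisors_of_ne_zero (by rwa [Ne, Ideal.Quotient.eq_zero_iff_mem]))
      (by rw [Ideal.Quotient.factor_mk, Ideal.Quotient.eq_zero_iff_mem]; exact hxq)
    push_cast [List.length_cons]
    exact (add_le_add_left h1 1).trans h2

lemma ringKrullDim_quotient_le_length (p : Ideal A) [p.IsPrime] (rs : List A)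
    (hrs : ∀ r ∈ rs, r ∈ maximalIdeal A)
    (h : maximalIdeal A ≤ (p ⊔ Ideal.ofList rs).radical) :
    ringKrullDim (A ⧸ p) ≤ rs.length := by
  classical
  let f := Ideal.Quotient.mk p
  have hf : Function.Surjective f := Ideal.Quotient.mk_surjective
  have : IsLocalRing (A ⧸ p) := .of_surjective' f hf
  have hloc : IsLocalHom f := .of_surjective f hf
  let s : Finset (A ⧸ p) := (rs.map f).toFinset
  have hsm : (s : Set (A ⧸ p)) ⊆ maximalIdeal (A ⧸ p) := by
    intro y hy
    obtain ⟨r, hr, rfl⟩ : ∃ r ∈ rs, f r = y := by simpa [s] using hy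
    exact fun hu => hrs r hr (hloc.map_nonunit r hu)
  have hmin : maximalIdeal (A ⧸ p) ∈ (Ideal.span (s : Set (A ⧸ p))).minimalPrimes := by
    refine ⟨⟨inferInstance, Ideal.span_le.mpr hsm⟩, ?_⟩
    rintro q ⟨hq, hsq⟩ -
    intro y hy
    obtain ⟨z, rfl⟩ := hf y
    have hz : z ∈ maximalIdeal A := by
      rw [mem_maximalIdeal, mem_nonunits_iff] at hy ⊢
      exact fun hu => hy (hu.map f)
    obtain ⟨k, hk⟩ := h hz
    refine hq.mem_of_pow_mem k ?_
    rw [← map_pow]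
    have : p ⊔ Ideal.ofList rs ≤ q.comap f := by
      refine sup_le ?_ ?_
      · intro r hr
        rw [Ideal.mem_comap, Ideal.Quotient.eq_zero_iff_mem.mpr hr]
        exact zero_mem q
      · refine Ideal.span_le.mpr fun r hr => hsq (Ideal.subset_span ?_)
        simp only [s, List.coe_toFinset, List.mem_map, Set.mem_ofPred_eq]
        exact ⟨r, hr, rfl⟩
    exact this hk
  rw [← IsLocalRing.maximalIdeal_height_eq_ringKrullDim]
  have h1 := Ideal.height_le_spanRank_toENat_of_mem_minimalPrimes _ _ hmin
  have h2 : (maximalIdeal (A ⧸ p)).height ≤ (rs.length : ℕ∞) := by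
    refine h1.trans ?_
    have h3 : (Ideal.span (s : Set (A ⧸ p))).spanRank ≤ (s.card : Cardinal) := by
      refine (Submodule.spanRank_span_le_card (R := A ⧸ p) _).trans ?_
      simp
    have h4 : s.card ≤ rs.length := by
      simpa [s] using (rs.map f).toFinset_card_le
    calc _ ≤ Cardinal.toENat (s.card : Cardinal) := Cardinal.toENat.monotone' h3
      _ = (s.card : ℕ∞) := by simp
      _ ≤ _ := by exact_mod_cast h4
  exact_mod_cast h2

open CategoryTheory Abelian Limits in
lemma exists_isRegular_quotSMulTop {M : Type u} [AddCommGroup M] [Module A M]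
    [Module.Finite A M] {n : ℕ}
    (h : ∃ rs : List A, rs.length = n + 1 ∧ (∀ r ∈ rs, r ∈ maximalIdeal A) ∧ IsRegular M rs)
    {x : A} (hx : x ∈ maximalIdeal A) (hreg : IsSMulRegular M x) :
    ∃ rs : List A, rs.length = n ∧ (∀ r ∈ rs, r ∈ maximalIdeal A) ∧
      IsRegular (QuotSMulTop x M) rs := by
  have : Nontrivial M := h.choose_spec.2.2.nontrivial
  have hlt (N : Type u) [AddCommGroup N] [Module A N] [Module.Finite A N] [Nontrivial N] :
      maximalIdeal A • (⊤ : Submodule A N) < ⊤ :=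
    lt_top_iff_ne_top.mpr (Submodule.top_ne_ideal_smul_of_le_jacobson_annihilator
      (maximalIdeal_le_jacobson _)).symm
  have : Nontrivial (QuotSMulTop x M) := nontrivial_quotSMulTop_of_mem_maximalIdeal M hx
  have e1 := ((ModuleCat.exists_isRegular_tfae (maximalIdeal A) (n + 1) (ModuleCat.of A M)
    (hlt M)).out 1 3).mpr h
  refine ((ModuleCat.exists_isRegular_tfae (maximalIdeal A) n
    (ModuleCat.of A (QuotSMulTop x M)) (hlt _)).out 1 3).mp ?_
  intro i hi
  have zero1 := AddCommGrpCat.isZero_of_iff_subsingleton.mpr (e1 i (by omega))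
  have zero2 := AddCommGrpCat.isZero_of_iff_subsingleton.mpr (e1 (i + 1) (by omega))
  exact AddCommGrpCat.subsingleton_of_isZero <| ShortComplex.Exact.isZero_of_both_zeros
    ((Ext.covariant_sequence_exact₃' _
      (IsSMulRegular.smulShortComplex_shortExact (M := ModuleCat.of A M) hreg) i (i + 1) rfl))
    (zero1.eq_zero_of_src _) (zero2.eq_zero_of_tgt _)

lemma isWeaklyRegular_of_le_radical (rs : List A) (hrs : ∀ r ∈ rs, r ∈ maximalIdeal A)
    {M : Type u} [AddCommGroup M] [Module A M] [Module.Finite A M]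
    (hdepth : ∃ xs : List A, xs.length = rs.length ∧ (∀ r ∈ xs, r ∈ maximalIdeal A) ∧
      IsRegular M xs)
    (hrad : maximalIdeal A ≤ (Module.annihilator A M ⊔ Ideal.ofList rs).radical) :
    IsWeaklyRegular M rs := by
  induction rs generalizing M with
  | nil => simp
  | cons a rs ih =>
    have hreg : IsSMulRegular M a := by
      by_contra hn
      have : a ∈ ⋃ p ∈ associatedPrimes A M, (p : Set A) := by
        rw [biUnion_associatedPrimes_eq_compl_regular]; exact hn
      obtain ⟨p, hp, hap⟩ := Set.mem_iUnion₂.mp this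
      have hpp : p.IsPrime := IsAssociatedPrime.isPrime hp
      obtain ⟨xs, hl, hm, hxs⟩ := hdepth
      have h1 := length_le_ringKrullDim_quotient_of_isAssociatedPrime xs hm hxs hp
      have hann : Module.annihilator A M ≤ p := by
        rw [← Submodule.annihilator_top]; exact IsAssociatedPrime.annihilator_le hp
      have h2 := ringKrullDim_quotient_le_length p rs (fun r hr => hrs r (by simp [hr]))
        (hrad.trans (Ideal.radical_mono (sup_le (hann.trans le_sup_left) (by
          rw [Ideal.ofList_cons]
          exact sup_le_sup_right (by rwa [Ideal.span_singleton_le_iff_mem]) _))))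
      have h3 := h1.trans h2
      rw [hl, List.length_cons] at h3
      norm_cast at h3
      omega
    refine IsWeaklyRegular.cons hreg (ih (fun r hr => hrs r (by simp [hr]))
      (exists_isRegular_quotSMulTop hdepth (hrs a (by simp)) hreg)
      (hrad.trans (Ideal.radical_mono (sup_le ?_ ?_))))
    · exact (LinearMap.annihilator_le_of_surjective _
        (Submodule.mkQ_surjective (a • (⊤ : Submodule A M)))).trans le_sup_left
    · rw [Ideal.ofList_cons]
      refine sup_le_sup_right ?_ _
      rw [Ideal.span_singleton_le_iff_mem, Module.mem_annihilator]
      intro m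
      obtain ⟨m, rfl⟩ := Submodule.mkQ_surjective _ m
      rw [← map_smul]
      exact (Submodule.Quotient.mk_eq_zero _).mpr
        (Submodule.smul_mem_pointwise_smul _ _ _ trivial)

end Depth

section Forms

open MvPolynomial

variable {A σ : Type*} [CommRing A]

/-- Homogeneous polynomials of degree `n` in the variables of `S` with coefficients in `J`. -/
def formsWithCoeffs (S : Set σ) (n : ℕ) (J : Ideal A) : Submodule A (MvPolynomial σ A) where
  carrier := {F | ∀ m, coeff m F ∈ J ∧ (coeff m F ≠ 0 → m.degree = n ∧ ↑m.support ⊆ S)}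
  zero_mem' := fun m => by simp
  add_mem' := by
    intro F G hF hG m
    refine ⟨by rw [coeff_add]; exact J.add_mem (hF m).1 (hG m).1, fun h => ?_⟩
    by_cases h' : coeff m F = 0
    · exact (hG m).2 (by simpa [h'] using h)
    · exact (hF m).2 h'
  smul_mem' := by
    intro c F hF m
    refine ⟨by rw [coeff_smul]; exact J.mul_mem_left c (hF m).1, fun h => (hF m).2 ?_⟩
    rintro h'
    simp [h'] at h

variable {S : Set σ} {n : ℕ} {J K : Ideal A} {F G : MvPolynomial σ A}

lemma mem_formsWithCoeffs_of_coeff_mem (hF : F ∈ formsWithCoeffs S n J)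
    (h : ∀ m, coeff m F ∈ K) : F ∈ formsWithCoeffs S n K :=
  fun m => ⟨h m, (hF m).2⟩

lemma formsWithCoeffs_mono (h : J ≤ K) : formsWithCoeffs S n J ≤ formsWithCoeffs S n K :=
  fun _ hF m => ⟨h (hF m).1, (hF m).2⟩

lemma mul_mem_formsWithCoeffs {k : ℕ} (hF : F ∈ formsWithCoeffs S n J)
    (hG : G ∈ formsWithCoeffs S k K) : F * G ∈ formsWithCoeffs S (n + k) (J * K) := by
  classical
  intro m
  rw [coeff_mul]
  refine ⟨Ideal.sum_mem _ fun x _ => Ideal.mul_mem_mul (hF _).1 (hG _).1, fun h => ?_⟩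
  obtain ⟨x, hx, hne⟩ := Finset.exists_ne_zero_of_sum_ne_zero h
  obtain ⟨h1, h2⟩ := (hF x.1).2 (left_ne_zero_of_mul hne)
  obtain ⟨h3, h4⟩ := (hG x.2).2 (right_ne_zero_of_mul hne)
  rw [Finset.HasAntidiagonal.mem_antidiagonal] at hx
  rw [← hx]
  refine ⟨by rw [map_add, h1, h3], ?_⟩
  refine (Finset.coe_subset.mpr Finsupp.support_add).trans ?_
  rw [Finset.coe_union]
  exact Set.union_subset h2 h4

lemma monomial_mem_formsWithCoeffs {m : σ →₀ ℕ} (hm : m.degree = n) (hS : ↑m.support ⊆ S)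
    {r : A} (hr : r ∈ J) : monomial m r ∈ formsWithCoeffs S n J := by
  classical
  intro m'
  rw [coeff_monomial]
  split_ifs with h
  · subst h; exact ⟨hr, fun _ => ⟨hm, hS⟩⟩
  · simp

lemma map_formsWithCoeffs (a : σ → A) (S : Set σ) (n : ℕ) (J : Ideal A) :
    (formsWithCoeffs S n J).map (aeval a).toLinearMap = J * Ideal.span (a '' S) ^ n := by
  apply le_antisymm
  · rintro _ ⟨F, hF, rfl⟩
    rw [AlgHom.toLinearMap_apply, aeval_def, eval₂_eq]
    refine Ideal.sum_mem _ fun m hm => Ideal.mul_mem_mul (hF m).1 ?_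
    obtain ⟨h1, h2⟩ := (hF m).2 (by simpa using hm)
    rw [← h1, Finsupp.degree_apply, ← Finset.prod_pow_eq_pow_sum]
    exact Ideal.prod_mem_prod fun i hi =>
      Ideal.pow_mem_pow (Ideal.subset_span (Set.mem_image_of_mem a (h2 hi))) _
  · induction n with
    | zero =>
      intro r hr
      refine ⟨C r, monomial_mem_formsWithCoeffs (by simp) (by simp) (by simpa using hr), by simp⟩
    | succ n ih =>
      rw [pow_succ, ← mul_assoc]
      refine Ideal.mul_le.mpr fun r hr s hs => ?_
      obtain ⟨F, hF, rfl⟩ := ih hr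
      induction hs using Submodule.span_induction with
      | mem s hs =>
        obtain ⟨i, hi, rfl⟩ := hs
        refine ⟨F * X i, ?_, by simp⟩
        have := mul_mem_formsWithCoeffs hF (G := X i) (k := 1) (K := ⊤)
          (monomial_mem_formsWithCoeffs (by simp) (by
            refine (Finset.coe_subset.mpr Finsupp.support_single_subset).trans (by simpa))
            trivial)
        simpa using this
      | zero => simp
      | add x y _ _ hx hy => rw [mul_add]; exact add_mem hx hy
      | smul c x _ hx => rw [mul_smul_comm]; exact Submodule.smul_mem _ _ hx

lemma exists_form_of_mem {a : σ → A} {y : A} (hy : y ∈ J * Ideal.span (a '' S) ^ n) :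
    ∃ F ∈ formsWithCoeffs S n J, aeval a F = y := by
  rw [← map_formsWithCoeffs] at hy
  exact hy

lemma aeval_mem_of_mem_formsWithCoeffs (a : σ → A) (hF : F ∈ formsWithCoeffs S n J) :
    aeval a F ∈ J * Ideal.span (a '' S) ^ n := by
  rw [← map_formsWithCoeffs]
  exact ⟨F, hF, rfl⟩

/-- If `a` has only trivial relations on `S` in degree `n`, then any form whose value lies in
`J * (a '' S) ^ n` has coefficients in `J`. -/
lemma coeff_mem_of_aeval_mem {a : σ → A}
    (h : ∀ F ∈ formsWithCoeffs S n (⊤ : Ideal A), aeval a F = 0 →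
      ∀ m, coeff m F ∈ Ideal.span (a '' S))
    (hJ : Ideal.span (a '' S) ≤ J) (hF : F ∈ formsWithCoeffs S n (⊤ : Ideal A))
    (hFJ : aeval a F ∈ J * Ideal.span (a '' S) ^ n) (m : σ →₀ ℕ) : coeff m F ∈ J := by
  obtain ⟨G, hG, hGF⟩ := exists_form_of_mem hFJ
  have := h (F - G) (Submodule.sub_mem _ hF (formsWithCoeffs_mono le_top hG))
    (by rw [map_sub, hGF, sub_self]) m
  have h2 := J.add_mem (hJ this) (hG m).1
  simpa using h2

/-- `a i` is a nonzerodivisor modulo the later elements, for all `i` in the list. -/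
def IsRevRegular (a : σ → A) : List σ → Prop
  | [] => True
  | i :: l => (∀ y, a i * y ∈ Ideal.span (a '' {j | j ∈ l}) → y ∈ Ideal.span (a '' {j | j ∈ l})) ∧
      IsRevRegular a l

lemma mem_span_pow_of_mul_mem {a : σ → A} {r : A}
    (hr : ∀ y, r * y ∈ Ideal.span (a '' S) → y ∈ Ideal.span (a '' S))
    (h : ∀ n, ∀ F ∈ formsWithCoeffs S n (⊤ : Ideal A), aeval a F = 0 →
      ∀ m, coeff m F ∈ Ideal.span (a '' S)) (k : ℕ) {y : A}
    (hy : r * y ∈ Ideal.span (a '' S) ^ k) : y ∈ Ideal.span (a '' S) ^ k := by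
  induction k with
  | zero => simp
  | succ k ih =>
    obtain ⟨G, hG, rfl⟩ := exists_form_of_mem (J := ⊤) (a := a) (n := k) (y := y)
      (by simpa using ih (Ideal.pow_le_pow_right (Nat.le_succ k) hy))
    rw [pow_succ'] at hy ⊢
    refine aeval_mem_of_mem_formsWithCoeffs a (mem_formsWithCoeffs_of_coeff_mem hG fun m => hr _ ?_)
    have := coeff_mem_of_aeval_mem (h k) le_rfl (F := r • G) (Submodule.smul_mem _ _ hG)
      (by simpa using hy) m
    simpa using this

/-- A regular sequence is quasi-regular. -/
theorem IsRevRegular.coeff_mem {a : σ → A} {l : List σ} (hl : IsRevRegular a l)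
    (hnd : l.Nodup) (n : ℕ) :
    ∀ F ∈ formsWithCoeffs {j | j ∈ l} n (⊤ : Ideal A), aeval a F = 0 →
      ∀ m, coeff m F ∈ Ideal.span (a '' {j | j ∈ l}) := by
  classical
  induction l generalizing n with
  | nil =>
    intro F hF h0
    have hFC : F = C (coeff 0 F) := by
      ext m
      rw [coeff_C]
      split_ifs with hm
      · rw [hm]
      · by_contra hne
        have := ((hF m).2 hne).2
        have h0 : m.support = ∅ := by simpa [Set.subset_empty_iff] using this
        exact hm (Finsupp.support_eq_empty.mp h0).symm
    have : F = 0 := by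
      rw [hFC] at h0 ⊢
      simpa using h0
    simp [this]
  | cons i l ih =>
    have ihl := fun n => ih hl.2 (List.nodup_cons.mp hnd).2 n
    have hil : i ∉ l := (List.nodup_cons.mp hnd).1
    set Q' := Ideal.span (a '' {j | j ∈ l}) with hQ'
    set Q := Ideal.span (a '' {j | j ∈ i :: l}) with hQ
    have hQQ : Q' ≤ Q := Ideal.span_mono (Set.image_mono fun j hj => List.mem_cons_of_mem i hj)
    have haQ : a i ∈ Q := Ideal.subset_span ⟨i, by simp, rfl⟩
    induction n with
    | zero =>
      intro F hF h0
      have hFC : F = C (coeff 0 F) := by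
        ext m
        rw [coeff_C]
        split_ifs with hm
        · rw [hm]
        · by_contra hne
          have := ((hF m).2 hne).1
          exact hm ((Finsupp.degree_eq_zero_iff m).mp this).symm
      have : F = 0 := by
        rw [hFC] at h0 ⊢
        simpa using h0
      simp [this]
    | succ n ihn =>
      intro F hF h0
      set H := F.divMonomial (Finsupp.single i 1) with hH
      set G := F.modMonomial (Finsupp.single i 1) with hG
      have hFHG : X i * H + G = F := divMonomial_add_modMonomial_single F i
      have hHm : H ∈ formsWithCoeffs {j | j ∈ i :: l} n (⊤ : Ideal A) := by
        intro m
        refine ⟨trivial, fun hne => ?_⟩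
        rw [hH, coeff_divMonomial] at hne
        obtain ⟨h1, h2⟩ := (hF _).2 hne
        refine ⟨by simp [map_add] at h1; omega, fun j hj => h2 ?_⟩
        simp only [Finset.mem_coe, Finsupp.mem_support_iff, Finsupp.add_apply] at hj ⊢
        omega
      have hGm : G ∈ formsWithCoeffs {j | j ∈ l} (n + 1) (⊤ : Ideal A) := by
        intro m
        refine ⟨trivial, fun hne => ?_⟩
        by_cases hle : Finsupp.single i 1 ≤ m
        · exact absurd (coeff_modMonomial_of_le F hle) hne
        · rw [hG, coeff_modMonomial_of_not_le F hle] at hne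
          obtain ⟨h1, h2⟩ := (hF _).2 hne
          refine ⟨h1, fun j hj => ?_⟩
          rcases List.mem_cons.mp (h2 hj) with rfl | h
          · simp only [Finset.mem_coe, Finsupp.mem_support_iff] at hj
            exact absurd (by simpa using Nat.one_le_iff_ne_zero.mpr hj) hle
          · exact h
      have hev : a i * aeval a H + aeval a G = 0 := by
        rw [← h0, ← hFHG]; simp
      have hHQ : aeval a H ∈ Q' ^ (n + 1) := by
        refine mem_span_pow_of_mul_mem hl.1 ihl (n + 1) ?_
        rw [eq_neg_of_add_eq_zero_left hev]
        refine Ideal.neg_mem_iff _ |>.mpr ?_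
        simpa using aeval_mem_of_mem_formsWithCoeffs a hGm
      have hHc : ∀ m, coeff m H ∈ Q := by
        refine coeff_mem_of_aeval_mem ihn le_rfl hHm ?_
        rw [← pow_succ']
        exact Ideal.pow_right_mono hQQ _ hHQ
      obtain ⟨h, hh, hhH⟩ := exists_form_of_mem (J := ⊤) (a := a) (n := n + 1) (y := aeval a H)
        (by simpa using hHQ)
      have hGh := ihl (n + 1) (G + a i • h) (Submodule.add_mem _ hGm (Submodule.smul_mem _ _ hh))
        (by rw [map_add, map_smul, hhH, smul_eq_mul, add_comm]; exact hev)
      have hGc : ∀ m, coeff m G ∈ Q := by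
        intro m
        have h1 := hQQ (hGh m)
        rw [coeff_add, coeff_smul, smul_eq_mul] at h1
        exact (Ideal.add_mem_iff_left _ (Q.mul_mem_right _ haQ)).mp h1
      intro m
      rw [← hFHG, coeff_add, coeff_X_mul']
      refine Q.add_mem ?_ (hGc m)
      split_ifs
      · exact hHc _
      · exact Q.zero_mem

end Forms

section Applications

open MvPolynomial IsLocalRing RingTheory.Sequence

lemma isRevRegular_of_isWeaklyRegular {A σ : Type*} [CommRing A] (a : σ → A) (l : List σ)
    (h : IsWeaklyRegular A (l.map a).reverse) : IsRevRegular a l := by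
  induction l with
  | nil => trivial
  | cons i l ih =>
    rw [List.map_cons, List.reverse_cons, isWeaklyRegular_append_iff,
      isWeaklyRegular_singleton_iff, isSMulRegular_quotient_iff_mem_of_smul_mem] at h
    have hspan : Ideal.ofList (l.map a).reverse • (⊤ : Submodule A A) =
        Ideal.span (a '' {j | j ∈ l}) := by
      rw [smul_eq_mul, Ideal.mul_top, Ideal.ofList]
      congr 1
      ext x
      simp
    rw [hspan] at h
    exact ⟨h.2, ih h.1⟩

lemma coeff_mem_of_mul_coeff_mem {A σ : Type*} [CommRing A] [IsLocalRing A] [IsNoetherianRing A]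
    [LinearOrder σ] [WellFoundedGT σ] {I : Ideal A} (hI : maximalIdeal A ≤ I.radical)
    {F G : MvPolynomial σ A} (hF : ∃ m, coeff m F ∉ maximalIdeal A)
    (hFG : ∀ m, coeff m (F * G) ∈ I) (m : σ →₀ ℕ) : coeff m G ∈ I := by
  classical
  by_contra hm
  obtain ⟨k, hk⟩ := Ideal.exists_pow_le_of_le_radical_of_fg hI (IsNoetherian.noetherian _)
  have hex : ∃ j, ∀ u ∈ maximalIdeal A ^ j, ∀ c, u * coeff c G ∈ I :=
    ⟨k, fun u hu c => I.mul_mem_right _ (hk hu)⟩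
  obtain ⟨u, hu, c, hc⟩ : ∃ u, (∀ v ∈ maximalIdeal A, ∀ c, v * u * coeff c G ∈ I) ∧
      ∃ c, u * coeff c G ∉ I := by
    have hj := Nat.find_spec hex
    obtain ⟨j, hj'⟩ : ∃ j, Nat.find hex = j + 1 := by
      refine Nat.exists_eq_succ_of_ne_zero fun h0 => hm ?_
      rw [h0] at hj
      simpa using hj 1 (by simp) m
    rw [hj'] at hj
    have := Nat.find_min hex (m := j) (by omega)
    push Not at this
    obtain ⟨u, hu, c, hc⟩ := this
    exact ⟨u, fun v hv => hj _ (by rw [pow_succ']; exact Ideal.mul_mem_mul hv hu), c, hc⟩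
  let ord : MonomialOrder σ := MonomialOrder.lex
  obtain ⟨α, hα, hαmax⟩ := Finset.exists_max_image
    (F.support.filter fun m => coeff m F ∉ maximalIdeal A) (fun m => ord.toSyn m) (by
      obtain ⟨m, hm⟩ := hF
      exact ⟨m, Finset.mem_filter.mpr
        ⟨mem_support_iff.mpr fun h => hm (by rw [h]; exact zero_mem _), hm⟩⟩)
  obtain ⟨γ, hγ, hγmax⟩ := Finset.exists_max_image
    (G.support.filter fun m => u * coeff m G ∉ I) (fun m => ord.toSyn m)
      ⟨c, by simpa using ⟨fun h => hc (by simp [h]), hc⟩⟩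
  rw [Finset.mem_filter] at hα hγ
  have hF' : ∀ m, ord.toSyn α < ord.toSyn m → coeff m F ∈ maximalIdeal A := by
    intro m hm
    by_contra hne
    exact absurd (hαmax m (Finset.mem_filter.mpr
      ⟨mem_support_iff.mpr fun h => hne (by rw [h]; exact zero_mem _), hne⟩)) (not_le.mpr hm)
  have hG' : ∀ m, ord.toSyn γ < ord.toSyn m → u * coeff m G ∈ I := by
    intro m hm
    by_contra hne
    exact absurd (hγmax m (by simpa using ⟨fun h => hne (by simp [h]), hne⟩)) (not_le.mpr hm)
  have hsum := I.mul_mem_left u (hFG (α + γ))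
  rw [coeff_mul, Finset.mul_sum, ← Finset.add_sum_erase _ _
    (Finset.HasAntidiagonal.mem_antidiagonal.mpr (rfl : (α, γ).1 + (α, γ).2 = α + γ)),
    Ideal.add_mem_iff_left] at hsum
  · refine hγ.2 ?_
    have hunit : IsUnit (coeff α F) := by simpa using hα.2
    rw [← Ideal.unit_mul_mem_iff_mem I hunit]
    convert hsum using 1
    ring
  · refine I.sum_mem fun x hx => ?_
    rw [Finset.mem_erase, Finset.HasAntidiagonal.mem_antidiagonal] at hx
    have hadd : ord.toSyn x.1 + ord.toSyn x.2 = ord.toSyn α + ord.toSyn γ := by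
      rw [← map_add, ← map_add, hx.2]
    rcases lt_trichotomy (ord.toSyn γ) (ord.toSyn x.2) with h | h | h
    · rw [mul_left_comm]
      exact I.mul_mem_left _ (hG' _ h)
    · exfalso
      rw [h] at hadd
      have h1 := ord.toSyn.injective (add_right_cancel hadd)
      exact hx.1 (Prod.ext h1 (ord.toSyn.injective h).symm)
    · have h1 : ord.toSyn α < ord.toSyn x.1 := by
        by_contra hle
        exact absurd hadd (ne_of_lt (add_lt_add_of_le_of_lt (not_lt.mp hle) h))
      have := hu _ (hF' _ h1) x.2
      rwa [mul_comm (coeff x.1 F), mul_assoc] at this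

end Applications

section FormLength

open MvPolynomial IsLocalRing

variable {A : Type*} [CommRing A]

lemma length_quotient_eq_add {K L : Ideal A} (h : K ≤ L) :
    Module.length A (A ⧸ K) =
      Module.length A (Submodule.map K.mkQ L) + Module.length A (A ⧸ L) := by
  rw [Module.length_eq_add_of_exact (Submodule.map K.mkQ L).subtype (Submodule.map K.mkQ L).mkQ
    (Submodule.subtype_injective _) (Submodule.mkQ_surjective _)
    (LinearMap.exact_subtype_mkQ _), (Submodule.quotientQuotientEquivQuotient K L h).length_eq]

section Pi

variable {ι M : Type*} [Fintype ι] [AddCommGroup M] [Module A M] {f : (ι → A) →ₗ[A] M}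
  {J : Ideal A}

lemma length_pi_quotient_pi (ι : Type*) [Fintype ι] (J : Ideal A) :
    Module.length A ((ι → A) ⧸ Submodule.pi Set.univ fun _ : ι => J) =
      Fintype.card ι * Module.length A (A ⧸ J) := by
  classical
  rw [(Submodule.quotientPi fun _ : ι => (J : Submodule A A)).length_eq]
  simp

lemma length_range_of_forall_apply_eq_zero_iff (h : ∀ c, f c = 0 ↔ ∀ i, c i ∈ J) :
    Module.length A (LinearMap.range f) = Fintype.card ι * Module.length A (A ⧸ J) := by
  have hker : LinearMap.ker f = Submodule.pi Set.univ fun _ : ι => J := by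
    ext c; simp [h]
  rw [← f.quotKerEquivRange.length_eq, hker, length_pi_quotient_pi]

lemma card_mul_length_le_length_range (h : ∀ c, f c = 0 → ∀ i, c i ∈ J) :
    Fintype.card ι * Module.length A (A ⧸ J) ≤ Module.length A (LinearMap.range f) := by
  have hker : LinearMap.ker f ≤ Submodule.pi Set.univ fun _ : ι => J :=
    fun c hc => by simpa using h c hc
  rw [← f.quotKerEquivRange.length_eq, ← length_pi_quotient_pi]
  exact Module.length_le_of_surjective (Submodule.factor hker) (Submodule.factor_surjective hker)

end Pi

variable {d : ℕ}

/-- The form of degree `n` with prescribed coefficients. -/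
noncomputable def formOfCoeffs (A : Type*) [CommRing A] (d n : ℕ) :
    (Finset.finsuppAntidiag (Finset.univ : Finset (Fin d)) n → A) →ₗ[A] MvPolynomial (Fin d) A :=
  ∑ m : Finset.finsuppAntidiag (Finset.univ : Finset (Fin d)) n,
    (monomial (m : Fin d →₀ ℕ)).comp (LinearMap.proj m)

lemma coeff_formOfCoeffs {n : ℕ} (c) (m : Fin d →₀ ℕ) : coeff m (formOfCoeffs A d n c) =
    if h : m ∈ Finset.finsuppAntidiag Finset.univ n then c ⟨m, h⟩ else 0 := by
  classical
  simp only [formOfCoeffs, LinearMap.sum_apply, LinearMap.comp_apply, LinearMap.proj_apply,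
    coeff_sum, coeff_monomial]
  split_ifs with h
  · rw [Finset.sum_eq_single ⟨m, h⟩]
    · simp
    · rintro ⟨m', hm'⟩ _ hne
      rw [if_neg fun h => hne (Subtype.ext h)]
    · simp
  · refine Finset.sum_eq_zero fun m' _ => if_neg ?_
    rintro rfl
    exact h m'.2

lemma mem_finsuppAntidiag_univ_iff {n : ℕ} {m : Fin d →₀ ℕ} :
    m ∈ Finset.finsuppAntidiag Finset.univ n ↔ m.degree = n := by
  simp [Finset.mem_finsuppAntidiag, Finsupp.degree_eq_sum]

lemma formOfCoeffs_mem {n : ℕ} (c) :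
    formOfCoeffs A d n c ∈ formsWithCoeffs Set.univ n (⊤ : Ideal A) := by
  refine fun m => ⟨trivial, fun h => ⟨?_, Set.subset_univ _⟩⟩
  rw [coeff_formOfCoeffs] at h
  split_ifs at h with h'
  · exact mem_finsuppAntidiag_univ_iff.mp h'
  · exact absurd rfl h

lemma formOfCoeffs_coeff {n : ℕ} {F : MvPolynomial (Fin d) A}
    (hF : F ∈ formsWithCoeffs Set.univ n (⊤ : Ideal A)) :
    formOfCoeffs A d n (fun m => coeff m F) = F := by
  ext m
  rw [coeff_formOfCoeffs]
  split_ifs with h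
  · rfl
  · by_contra hne
    exact h (mem_finsuppAntidiag_univ_iff.mpr ((hF m).2 (Ne.symm hne)).1)

lemma formOfCoeffs_mem_iff {n : ℕ} {J : Ideal A} {c} :
    (∀ i, c i ∈ J) ↔ ∀ m, coeff m (formOfCoeffs A d n c) ∈ J := by
  refine ⟨fun h m => ?_, fun h i => ?_⟩
  · rw [coeff_formOfCoeffs]
    split_ifs
    · exact h _
    · exact J.zero_mem
  · simpa [coeff_formOfCoeffs] using h i

lemma card_finsuppAntidiag_univ_succ (k n : ℕ) :
    Fintype.card (Finset.finsuppAntidiag (Finset.univ : Finset (Fin (k + 1))) n) =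
      (n + k).choose k := by
  rw [Fintype.card_coe, Finset.card_finsuppAntidiag_nat_eq_choose, Finset.card_fin,
    ← Nat.choose_symm_add]
  congr 1
  omega

/-- The elements of `a` satisfy only the trivial relations modulo the ideal they span. -/
def IsQuasiRegular (a : Fin d → A) : Prop :=
  ∀ n, ∀ F ∈ formsWithCoeffs Set.univ n (⊤ : Ideal A), aeval a F = 0 →
    ∀ m, coeff m F ∈ Ideal.span (Set.range a)

lemma mem_mul_span_pow_iff {a : Fin d → A} (ha : IsQuasiRegular a) {J : Ideal A}
    (hJ : Ideal.span (Set.range a) ≤ J) {n : ℕ} {F : MvPolynomial (Fin d) A}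
    (hF : F ∈ formsWithCoeffs Set.univ n (⊤ : Ideal A)) :
    aeval a F ∈ J * Ideal.span (Set.range a) ^ n ↔ ∀ m, coeff m F ∈ J := by
  have ha' := ha n
  rw [← Set.image_univ] at ha' hJ ⊢
  exact ⟨fun h => coeff_mem_of_aeval_mem ha' hJ hF h,
    fun h => aeval_mem_of_mem_formsWithCoeffs a (mem_formsWithCoeffs_of_coeff_mem hF h)⟩

lemma length_quotient_mul_span_pow {k : ℕ} {a : Fin (k + 1) → A} (ha : IsQuasiRegular a)
    {J : Ideal A} (hJ : Ideal.span (Set.range a) ≤ J) (n : ℕ) :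
    Module.length A (A ⧸ J * Ideal.span (Set.range a) ^ n) =
      (n + k).choose k * Module.length A (A ⧸ J) +
        Module.length A (A ⧸ Ideal.span (Set.range a) ^ n) := by
  rw [length_quotient_eq_add (K := J * Ideal.span (Set.range a) ^ n)
    (L := Ideal.span (Set.range a) ^ n) Ideal.mul_le_right]
  congr 1
  let f := (J * Ideal.span (Set.range a) ^ n).mkQ ∘ₗ (aeval a).toLinearMap ∘ₗ
    formOfCoeffs A (k + 1) n
  have hrange : Submodule.map (J * Ideal.span (Set.range a) ^ n).mkQ
      (Ideal.span (Set.range a) ^ n) = LinearMap.range f := by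
    rw [LinearMap.range_comp, LinearMap.range_comp]
    congr 1
    have hr : LinearMap.range (formOfCoeffs A (k + 1) n) =
        formsWithCoeffs Set.univ n (⊤ : Ideal A) := by
      ext F
      exact ⟨by rintro ⟨c, rfl⟩; exact formOfCoeffs_mem c, fun h => ⟨_, formOfCoeffs_coeff h⟩⟩
    rw [hr, map_formsWithCoeffs, Set.image_univ, Ideal.top_mul]
  rw [hrange, length_range_of_forall_apply_eq_zero_iff (f := f) (J := J),
    card_finsuppAntidiag_univ_succ]
  intro c
  rw [formOfCoeffs_mem_iff, ← mem_mul_span_pow_iff ha hJ (formOfCoeffs_mem c)]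
  exact Submodule.Quotient.mk_eq_zero _

lemma length_quotient_span_pow {k : ℕ} {a : Fin (k + 1) → A} (ha : IsQuasiRegular a) (n : ℕ) :
    Module.length A (A ⧸ Ideal.span (Set.range a) ^ n) =
      (n + k).choose (k + 1) * Module.length A (A ⧸ Ideal.span (Set.range a)) := by
  induction n with
  | zero =>
    have : Subsingleton (A ⧸ Ideal.span (Set.range a) ^ 0) := by
      rw [pow_zero]; exact Ideal.Quotient.subsingleton_iff.mpr Ideal.one_eq_top
    simp [Module.length_eq_zero]
  | succ n ih =>
    rw [pow_succ', length_quotient_mul_span_pow ha le_rfl, ih, ← add_mul, add_right_comm n 1 k,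
      Nat.choose_succ_succ, Nat.cast_add]

variable [IsLocalRing A] [IsNoetherianRing A]

lemma coeff_mem_maximalIdeal_of_aeval_mul_mem {a : Fin d → A} (ha : IsQuasiRegular a)
    {I : Ideal A} (hI : maximalIdeal A ≤ I.radical)
    (hQI : Ideal.span (Set.range a) ≤ I) {x : A} (hx : x ∈ I ^ 2)
    (hxQ : x ∉ Ideal.span (Set.range a) * I) {n : ℕ} {F : MvPolynomial (Fin d) A}
    (hF : F ∈ formsWithCoeffs Set.univ n (⊤ : Ideal A))
    (h : aeval a F * x ∈ I * Ideal.span (Set.range a) ^ (n + 1)) (m : Fin d →₀ ℕ) :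
    coeff m F ∈ maximalIdeal A := by
  by_contra hm
  have hxmem : x ∈ Ideal.span (Set.range a) := by
    have h1 := (mem_mul_span_pow_iff ha le_rfl (F := x • F) (Submodule.smul_mem _ _ hF)).mp (by
      rw [map_smul, smul_eq_mul, mul_comm x, ← pow_succ']
      exact Ideal.mul_le_right h) m
    have hunit : IsUnit (coeff m F) := by simpa using hm
    rw [coeff_smul, smul_eq_mul] at h1
    exact (Ideal.mul_unit_mem_iff_mem _ hunit).mp h1
  obtain ⟨L, hL, rfl⟩ := exists_form_of_mem (J := ⊤) (a := a) (S := Set.univ) (n := 1) (y := x)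
    (by simpa using hxmem)
  have hFL := mul_mem_formsWithCoeffs hF hL
  rw [Ideal.top_mul] at hFL
  rw [← map_mul] at h
  have h1 := coeff_mem_of_mul_coeff_mem hI ⟨m, hm⟩ ((mem_mul_span_pow_iff ha hQI hFL).mp h)
  refine hxQ ?_
  rw [mul_comm]
  have h2 := (mem_mul_span_pow_iff ha hQI hL).mpr h1
  rwa [pow_one] at h2

lemma choose_add_length_le {k : ℕ} {a : Fin (k + 1) → A} (ha : IsQuasiRegular a)
    {I : Ideal A} (hI : maximalIdeal A ≤ I.radical)
    (hQI : Ideal.span (Set.range a) ≤ I) (hne : I ^ 2 ≠ Ideal.span (Set.range a) * I) (n : ℕ) :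
    (n + k).choose k + Module.length A (A ⧸ I ^ (n + 2)) ≤
      Module.length A (A ⧸ I * Ideal.span (Set.range a) ^ (n + 1)) := by
  set Q := Ideal.span (Set.range a)
  obtain ⟨x, hx, hxQ⟩ : ∃ x ∈ I ^ 2, x ∉ Q * I := by
    by_contra! h
    exact hne (le_antisymm h (by rw [pow_two]; exact Ideal.mul_mono_left hQI))
  have hle : I * Q ^ (n + 1) ≤ I ^ (n + 2) := by
    rw [pow_succ' I]
    exact Ideal.mul_mono_right (Ideal.pow_right_mono hQI _)
  have hQ (c) : aeval a (formOfCoeffs A (k + 1) n c) ∈ I ^ n := by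
    have := aeval_mem_of_mem_formsWithCoeffs a (formOfCoeffs_mem (A := A) c)
    rw [Ideal.top_mul, Set.image_univ] at this
    exact Ideal.pow_right_mono hQI n this
  let f := (I * Q ^ (n + 1)).mkQ ∘ₗ LinearMap.mulRight A x ∘ₗ (aeval a).toLinearMap ∘ₗ
    formOfCoeffs A (k + 1) n
  have h1 : ((n + k).choose k : ℕ∞) ≤ Module.length A (LinearMap.range f) := by
    have : IsSimpleModule A (A ⧸ maximalIdeal A) :=
      isSimpleModule_iff_isCoatom.mpr Ideal.IsMaximal.out
    have h1 := card_mul_length_le_length_range (f := f) (J := maximalIdeal A) (by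
      intro c hc
      rw [formOfCoeffs_mem_iff]
      exact coeff_mem_maximalIdeal_of_aeval_mul_mem ha hI hQI hx hxQ (formOfCoeffs_mem c)
        ((Submodule.Quotient.mk_eq_zero _).mp hc))
    rwa [card_finsuppAntidiag_univ_succ, Module.length_eq_one, mul_one] at h1
  have h2 : LinearMap.range f ≤ Submodule.map (I * Q ^ (n + 1)).mkQ (I ^ (n + 2)) := by
    rw [LinearMap.range_comp]
    refine Submodule.map_mono ?_
    rintro _ ⟨c, rfl⟩
    rw [LinearMap.comp_apply, LinearMap.mulRight_apply, LinearMap.comp_apply,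
      AlgHom.toLinearMap_apply, pow_add]
    exact Ideal.mul_mem_mul (hQ c) hx
  rw [length_quotient_eq_add hle]
  exact add_le_add_left (h1.trans (Module.length_le_of_injective (Submodule.inclusion h2)
    (Submodule.inclusion_injective _))) _

end FormLength

section Binomial

open Filter Topology

lemma tendsto_choose_add_div_pow (s k : ℕ) :
    Tendsto (fun n : ℕ => ((n + s).choose k : ℝ) / (n : ℝ) ^ k) atTop
      (𝓝 (1 / (k.factorial : ℝ))) := by
  have h1 : Tendsto (fun n : ℕ => (n.choose k : ℝ) / (n : ℝ) ^ k) atTop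
      (𝓝 (1 / (k.factorial : ℝ))) := by
    have h := (isEquivalent_choose k).div
      (Asymptotics.IsEquivalent.refl (u := fun n : ℕ => (n : ℝ) ^ k) (l := atTop))
    refine h.symm.tendsto_nhds (tendsto_const_nhds.congr' ?_)
    filter_upwards [eventually_gt_atTop 0] with n hn
    have : (n : ℝ) ≠ 0 := by positivity
    simp only [Pi.div_apply]
    field_simp
  have h2 : Tendsto (fun n : ℕ => (((n + s : ℕ) : ℝ) / (n : ℝ)) ^ k) atTop (𝓝 1) := by
    have h0 : Tendsto (fun n : ℕ => 1 + (s : ℝ) / (n : ℝ)) atTop (𝓝 (1 + 0)) :=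
      tendsto_const_nhds.add (tendsto_const_div_atTop_nhds_zero_nat _)
    rw [add_zero] at h0
    have := h0.pow k
    rw [one_pow] at this
    refine this.congr' ?_
    filter_upwards [eventually_gt_atTop 0] with n hn
    have : (n : ℝ) ≠ 0 := by positivity
    push_cast
    field_simp
  have h3 := (h1.comp (tendsto_add_atTop_nat s)).mul h2
  rw [mul_one] at h3
  refine h3.congr' ?_
  filter_upwards [eventually_gt_atTop 0] with n hn
  have : (n : ℝ) ≠ 0 := by positivity
  have : ((n + s : ℕ) : ℝ) ≠ 0 := by positivity
  simp only [Function.comp]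
  rw [div_pow]
  field_simp

lemma tendsto_sum_choose_div_pow (k : ℕ) (c : ℕ → ℤ) (s : ℕ → ℕ) :
    Tendsto (fun n : ℕ =>
      ((∑ i ∈ Finset.range (k + 1), c i * ((n + s i).choose (k - i) : ℤ) : ℤ) : ℝ) / (n : ℝ) ^ k) atTop (𝓝 (c 0 * (1 / (k.factorial : ℝ)))) := by
  have hterm : ∀ i ∈ Finset.range (k + 1), Tendsto
      (fun n : ℕ => (c i : ℝ) * (((n + s i).choose (k - i) : ℝ) / (n : ℝ) ^ k)) atTop
      (𝓝 (if i = 0 then c 0 * (1 / (k.factorial : ℝ)) else 0)) := by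
    intro i hi
    split_ifs with h
    · subst h
      exact (tendsto_choose_add_div_pow (s 0) k).const_mul _
    · have hik : k - i + i = k := by have := Finset.mem_range.mp hi; omega
      have h1 := (tendsto_choose_add_div_pow (s i) (k - i)).mul
        ((tendsto_inv_atTop_nhds_zero_nat (𝕜 := ℝ)).pow i)
      rw [zero_pow h, mul_zero] at h1
      have h2 := h1.const_mul (c i : ℝ)
      rw [mul_zero] at h2
      refine h2.congr fun n => ?_
      rw [← hik, pow_add, hik, inv_pow, div_mul_eq_div_mul_one_div, div_mul_div_comm, mul_one,
        ← div_eq_mul_inv, div_div]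
  have h := tendsto_finsetSum _ hterm
  rw [Finset.sum_ite_eq' , if_pos (by simp)] at h
  refine h.congr fun n => ?_
  push_cast
  rw [Finset.sum_div]
  exact Finset.sum_congr rfl fun i _ => by ring

lemma leadingCoeff_le_of_sum_choose_le (k : ℕ) {c c' : ℕ → ℤ} {s s' : ℕ → ℕ}
    (h : ∀ᶠ n : ℕ in atTop, ∑ i ∈ Finset.range (k + 1), c i * ((n + s i).choose (k - i) : ℤ) ≤
      ∑ i ∈ Finset.range (k + 1), c' i * ((n + s' i).choose (k - i) : ℤ)) : c 0 ≤ c' 0 := by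
  have h1 := le_of_tendsto_of_tendsto (tendsto_sum_choose_div_pow k c s)
    (tendsto_sum_choose_div_pow k c' s') (by
      filter_upwards [h] with n hn
      gcongr
      )
  have h2 := le_of_mul_le_mul_right h1 (by positivity)
  exact_mod_cast h2

lemma eq_of_sum_choose_eq (k : ℕ) {c c' : ℕ → ℤ}
    (h : ∀ᶠ n : ℕ in atTop,
      ∑ i ∈ Finset.range (k + 1), c i * ((n + (k - i)).choose (k - i) : ℤ) =
      ∑ i ∈ Finset.range (k + 1), c' i * ((n + (k - i)).choose (k - i) : ℤ)) :
    ∀ i ≤ k, c i = c' i := by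
  induction k generalizing c c' with
  | zero =>
    intro i hi
    obtain ⟨n, hn⟩ := h.exists
    simpa [Nat.le_zero.mp hi] using hn
  | succ k ih =>
    have h0 : c 0 = c' 0 :=
      le_antisymm (leadingCoeff_le_of_sum_choose_le (k + 1) (h.mono fun n hn => hn.le))
        (leadingCoeff_le_of_sum_choose_le (k + 1) (h.mono fun n hn => hn.ge))
    rintro (_ | i) hi
    · exact h0
    · refine ih (c := fun i => c (i + 1)) (c' := fun i => c' (i + 1)) (h.mono fun n hn => ?_)
        i (by omega)
      rw [Finset.sum_range_succ', Finset.sum_range_succ' _ (k + 1), h0] at hn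
      simpa only [Nat.add_sub_add_right] using add_right_cancel hn

end Binomial

section HilbertCoefficients

open Filter

variable {k r : ℕ} {H : ℕ → ℕ} {e : ℕ → ℤ} {q h : ℕ}

/-- `H` is eventually given by the polynomial with Hilbert coefficients `e`. -/
def HasHilbertCoeffs (k : ℕ) (H : ℕ → ℕ) (e : ℕ → ℤ) : Prop :=
  ∀ᶠ n : ℕ in atTop, (H n : ℤ) = ∑ i ∈ Finset.range (k + 1),
    (-1) ^ i * e i * ((n + (k - i)).choose (k - i) : ℤ)

lemma sum_two_terms (k : ℕ) (q h : ℤ) (n : ℕ) (s : ℕ → ℕ) :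
    ∑ i ∈ Finset.range (k + 1 + 1), (if i = 0 then q else if i = 1 then h - q else 0) *
      ((n + s i).choose (k + 1 - i) : ℤ) =
      q * ((n + s 0).choose (k + 1) : ℤ) + (h - q) * ((n + s 1).choose k : ℤ) := by
  rw [Finset.sum_range_succ', Finset.sum_range_succ']
  simp
  ring

lemma upper_eq (k q h n : ℕ) :
    (((n + k).choose k * h + (n + k).choose (k + 1) * q : ℕ) : ℤ) =
      ∑ i ∈ Finset.range (k + 1 + 1), (if i = 0 then (q : ℤ) else if i = 1 then h - q else 0) *
        ((n + (k + 1 - i)).choose (k + 1 - i) : ℤ) := by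
  rw [sum_two_terms k q h n fun i => k + 1 - i]
  simp only [Nat.sub_zero, Nat.add_sub_cancel]
  rw [← add_assoc, Nat.choose_succ_succ]
  push_cast
  ring

lemma HasHilbertCoeffs.zero_eq (he : HasHilbertCoeffs (k + 1) H e)
    (h1 : ∀ n, (n + 1 + k).choose (k + 1) * q ≤ H (n + r))
    (h2 : ∀ n, H n ≤ (n + k).choose k * h + (n + k).choose (k + 1) * q) : e 0 = q := by
  apply le_antisymm
  · have := leadingCoeff_le_of_sum_choose_le (k + 1) (s := fun i => k + 1 - i)
      (s' := fun i => k + 1 - i) (c := fun i => (-1) ^ i * e i)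
      (c' := fun i => if i = 0 then (q : ℤ) else if i = 1 then h - q else 0) (by
        filter_upwards [he] with n hn
        rw [← hn, ← upper_eq]
        exact_mod_cast h2 n)
    simpa using this
  · have := leadingCoeff_le_of_sum_choose_le (k + 1) (s := fun _ => k + 1)
      (s' := fun i => r + (k + 1 - i)) (c := fun i => if i = 0 then (q : ℤ) else 0)
      (c' := fun i => (-1) ^ i * e i) (by
        filter_upwards [(tendsto_add_atTop_nat r).eventually he] with n hn
        simp only [← add_assoc, ite_mul, zero_mul]
        rw [Finset.sum_ite_eq', if_pos (by simp), ← hn]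
        have := h1 n
        rw [add_right_comm n 1 k, mul_comm] at this
        exact_mod_cast this)
    simpa using this

lemma HasHilbertCoeffs.eq_of_eq (he : HasHilbertCoeffs (k + 1) H e)
    (h2 : ∀ n, H n = (n + k).choose k * h + (n + k).choose (k + 1) * q) :
    ∀ i ≤ k + 1, (-1) ^ i * e i = if i = 0 then (q : ℤ) else if i = 1 then h - q else 0 := by
  refine eq_of_sum_choose_eq (k + 1) (c := fun i => (-1) ^ i * e i)
    (c' := fun i => if i = 0 then (q : ℤ) else if i = 1 then h - q else 0) ?_
  filter_upwards [he] with n hn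
  rw [← hn, ← upper_eq, h2 n]

lemma HasHilbertCoeffs.one_ne (he : HasHilbertCoeffs (k + 1) H e) (h0 : e 0 = q)
    (h2 : ∀ n, (n + k).choose k + H (n + 1) ≤
      (n + 1 + k).choose k * h + (n + 1 + k).choose (k + 1) * q) : e 1 ≠ e 0 - h := by
  intro h1
  have := leadingCoeff_le_of_sum_choose_le k (s := fun _ => k) (s' := fun i => 1 + (k - i))
    (c := fun i => if i = 0 then 1 else 0)
    (c' := fun i => if i = 0 then 0 else (-1) ^ i * e (i + 1)) (by
      filter_upwards [(tendsto_add_atTop_nat 1).eventually he] with n hn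
      have h3 : (((n + k).choose k + H (n + 1) : ℕ) : ℤ) ≤ _ := Int.ofNat_le.mpr (h2 n)
      rw [upper_eq, sum_two_terms k q h (n + 1) fun i => k + 1 - i, Nat.cast_add, hn,
        Finset.sum_range_succ', Finset.sum_range_succ'] at h3
      rw [Finset.sum_range_succ', Finset.sum_range_succ']
      simp only [Nat.add_sub_add_right, h0, h1] at h3
      simp [pow_succ, ← add_assoc] at h3 ⊢
      linarith)
  simp at this

end HilbertCoefficients

section QuasiRegular

open RingTheory.Sequence

lemma isQuasiRegular_of_isWeaklyRegular {A : Type*} [CommRing A] {d : ℕ} {a : Fin d → A}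
    (h : IsWeaklyRegular A ((List.finRange d).map a).reverse) : IsQuasiRegular a := by
  intro n
  have := (isRevRegular_of_isWeaklyRegular a _ h).coeff_mem (List.nodup_finRange d) n
  have huniv : {j | j ∈ List.finRange d} = Set.univ := by ext; simp
  rwa [huniv, Set.image_univ] at this

/-- In a Cohen-Macaulay local ring, a system of parameters is quasi-regular. -/
lemma IsCohenMacaulayLocal.isQuasiRegular {A : Type*} [CommRing A] [IsLocalRing A]
    [IsNoetherianRing A] {d : ℕ} (hCM : IsCohenMacaulayLocal A d) {a : Fin d → A}
    (ha : ∀ i, a i ∈ maximalIdeal A)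
    (hrad : maximalIdeal A ≤ (Ideal.span (Set.range a)).radical) : IsQuasiRegular a := by
  refine isQuasiRegular_of_isWeaklyRegular (isWeaklyRegular_of_le_radical _ ?_ ?_ ?_)
  · intro x hx
    obtain ⟨i, -, rfl⟩ := List.mem_map.mp (List.mem_reverse.mp hx)
    exact ha i
  · simpa using hCM.2
  · refine hrad.trans (Ideal.radical_mono (le_sup_of_le_right (Ideal.span_mono ?_)))
    rintro _ ⟨i, rfl⟩
    simp

end QuasiRegular

lemma moduleLength_eq_iff {A M : Type*} [CommRing A] [AddCommGroup M] [Module A M] {n : ℕ} :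
    moduleLength A M = (n : ℕ∞) ↔ Module.length A M = n := by
  rw [moduleLength, ← Module.coe_length]
  exact WithBot.coe_inj

/-- Huneke's theorem: `e₁ = e₀ - ℓ_A(A/I)` iff `I² = QI`; in that case `eᵢ = 0` for
`2 ≤ i ≤ d`.  Here `H n = ℓ_A(A/I^{n+1})` (so `H 0 = ℓ_A(A/I)`) and the Hilbert
coefficients `e i` are specified by the Hilbert–Samuel polynomial. -/
theorem huneke_equality (A : Type*) [CommRing A] [IsLocalRing A] [IsNoetherianRing A]
    [Infinite (ResidueField A)]
    (d : ℕ) (hd : 0 < d) (hCM : IsCohenMacaulayLocal A d)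
    (I Q : Ideal A) (hI : IsPrimaryToMax A I)
    (a : Fin d → A) (hQ : Q = Ideal.span (Set.range a)) (hQI : Q ≤ I)
    (hred : ∃ r : ℕ, I ^ (r + 1) = Q * I ^ r)
    (H : ℕ → ℕ)
    (hH : ∀ n : ℕ, moduleLength A (A ⧸ I ^ (n + 1)) = (H n : ℕ∞))
    (e : ℕ → ℤ) (N : ℕ)
    (hHS : ∀ n ≥ N, (H n : ℤ) =
      ∑ i ∈ Finset.range (d + 1),
        (-1) ^ i * e i * ((n + d - i).choose (d - i) : ℤ)) :
    (e 1 = e 0 - (H 0 : ℤ) ↔ I ^ 2 = Q * I) ∧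
      (I ^ 2 = Q * I → ∀ i : ℕ, 2 ≤ i → i ≤ d → e i = 0) := by
  obtain ⟨k, rfl⟩ := Nat.exists_eq_succ_of_ne_zero hd.ne'
  simp only [moduleLength_eq_iff] at hH
  obtain ⟨r, hr⟩ := hred
  have hpow (n : ℕ) : I ^ (n + r) = Q ^ n * I ^ r := by
    induction n with
    | zero => simp
    | succ n ih =>
      rw [add_right_comm, pow_succ, ih, mul_assoc, ← pow_succ, hr, ← mul_assoc, ← pow_succ]
  have hle (n : ℕ) : I ^ (n + r) ≤ Q ^ n := (hpow n).trans_le Ideal.mul_le_left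
  have he : HasHilbertCoeffs (k + 1) H e := by
    filter_upwards [Filter.eventually_ge_atTop N] with n hn
    rw [hHS n hn]
    refine Finset.sum_congr rfl fun i hi => ?_
    rw [Nat.succ_eq_add_one, Nat.add_sub_assoc (Nat.le_of_lt_succ (Finset.mem_range.mp hi))]
  have hrad : maximalIdeal A ≤ Q.radical := fun x hx => by
    obtain ⟨n, hn⟩ := hI.2 hx
    refine ⟨n * (1 + r), pow_one Q ▸ hle 1 ?_⟩
    rw [pow_mul]
    exact Ideal.pow_mem_pow hn _
  subst hQ
  have ha := hCM.isQuasiRegular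
    (fun i => hI.1 (hQI (Ideal.subset_span (Set.mem_range_self i)))) hrad
  set Q := Ideal.span (Set.range a)
  have hmono {K L : Ideal A} (h : K ≤ L) : Module.length A (A ⧸ L) ≤ Module.length A (A ⧸ K) :=
    Module.length_le_of_surjective (Submodule.factor h) (Submodule.factor_surjective h)
  obtain ⟨q, hq⟩ : ∃ q : ℕ, Module.length A (A ⧸ Q) = q := by
    refine ENat.ne_top_iff_exists.mp (ne_top_of_le_ne_top (ENat.natCast_ne_top (H r)) ?_) |>.imp
      fun _ => Eq.symm
    rw [← hH r, add_comm r 1]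
    exact hmono (pow_one Q ▸ hle 1)
  have hI0 : Module.length A (A ⧸ I) = H 0 := by
    rw [← hH 0, zero_add, pow_one]
  have hIQ (n : ℕ) : Module.length A (A ⧸ I * Q ^ n) =
      ((n + k).choose k * H 0 + (n + k).choose (k + 1) * q : ℕ) := by
    rw [length_quotient_mul_span_pow ha hQI, length_quotient_span_pow ha, hq, hI0]
    push_cast
    rfl
  have h1 (n : ℕ) : (n + 1 + k).choose (k + 1) * q ≤ H (n + r) := by
    have := hmono (hle (n + 1))
    rw [length_quotient_span_pow ha, hq, add_right_comm n 1 r, hH] at this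
    exact_mod_cast this
  have h2 (n : ℕ) : H n ≤ (n + k).choose k * H 0 + (n + k).choose (k + 1) * q := by
    have : I * Q ^ n ≤ I ^ (n + 1) := by
      rw [pow_succ']
      exact Ideal.mul_mono_right (Ideal.pow_right_mono hQI n)
    have := hmono this
    rw [hIQ, hH] at this
    exact_mod_cast this
  have h0 : e 0 = q := he.zero_eq h1 h2
  have h3 (h : I ^ 2 = Q * I) : ∀ i ≤ k + 1,
      (-1) ^ i * e i = if i = 0 then (q : ℤ) else if i = 1 then (H 0 : ℤ) - q else 0 := by
    refine he.eq_of_eq fun n => ?_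
    have hp : I ^ (n + 1) = I * Q ^ n := by
      induction n with
      | zero => simp
      | succ n ih =>
        rw [pow_succ, ih, mul_right_comm, ← pow_two, h, pow_succ, mul_comm Q I, mul_assoc,
          mul_comm Q]
    have := hH n
    rw [hp, hIQ] at this
    exact_mod_cast this.symm
  refine ⟨⟨fun h => ?_, fun h => ?_⟩, fun h i hi hik => ?_⟩
  · by_contra hne
    refine he.one_ne h0 (fun n => ?_) h
    have := choose_add_length_le ha hI.2 hQI hne n
    rw [hIQ, hH (n + 1)] at this
    exact_mod_cast this
  · have := h3 h 1 (by omega)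
    simp at this
    linarith
  · have := h3 h i hik
    rw [if_neg (by omega), if_neg (by omega)] at this
    simpa using this
end
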